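/- arXiv:2604.01061 — 2 statements merged into one kernel-verified Lean document; each statement's English description precedes it below -/
import Mathlib

section
/- Let S be a proper convex subset of the chambers of a hyperplane arrangement 𝓗 of n hyperplanes in general position in ℝ^d, with |S| = Σ_{i=0}^d C(k,i) for some real k ≥ d−1, where C(k,i) denotes the generalized binomial coefficient k(k−1)⋯(k−i+1)/i!. If |S| ≤ Σ_{i=0}^d C(n−d,i), then |∂S| ≥ Σ_{i=0}^{d−1} (d−i)·C(k,i). In particular, this conclusion holds whenever |S| is at most half of the total number of chambers and n ≥ d²/ln 2 + 2d. -/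
open Set Topology

noncomputable section

/-- A hyperplane arrangement of `n` affine hyperplanes in `ℝ^d`, given by
nonzero normal vectors and offsets: the `i`-th hyperplane is
`{x | ∑ j, normal i j * x j = offset i}`. -/
structure Arrangement (d n : ℕ) where
  normal : Fin n → (Fin d → ℝ)
  offset : Fin n → ℝ
  normal_ne : ∀ i, normal i ≠ 0

/-- The thickening (regular open hull) `T_S` of a set `S` of chambers. -/
def thickening {d : ℕ} (S : Set (Set (Fin d → ℝ))) : Set (Fin d → ℝ) :=
  interior (closure (⋃ C ∈ S, C))

/-- The set of connected components of a subset `X` of a topological space. -/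
def connComps {α : Type*} [TopologicalSpace α] (X : Set α) : Set (Set α) :=
  {c | ∃ x ∈ X, c = connectedComponentIn X x}

namespace Arrangement

variable {d n : ℕ} (𝓗 : Arrangement d n)

/-- The `i`-th hyperplane of the arrangement. -/
def H (i : Fin n) : Set (Fin d → ℝ) := {x | ∑ j, 𝓗.normal i j * x j = 𝓗.offset i}

/-- The positive open half-space determined by the `i`-th hyperplane. -/
def pos (i : Fin n) : Set (Fin d → ℝ) := {x | 𝓗.offset i < ∑ j, 𝓗.normal i j * x j}

/-- The negative open half-space determined by the `i`-th hyperplane. -/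
def neg (i : Fin n) : Set (Fin d → ℝ) := {x | ∑ j, 𝓗.normal i j * x j < 𝓗.offset i}

/-- The complement of the union of the hyperplanes. -/
def free : Set (Fin d → ℝ) := {x | ∀ i, x ∉ 𝓗.H i}

/-- The chambers: connected components of the complement of the hyperplanes. -/
def chambers : Set (Set (Fin d → ℝ)) :=
  {C | ∃ x ∈ 𝓗.free, C = connectedComponentIn 𝓗.free x}

/-- General position: the normals of any `≤ d` hyperplanes are linearly independent
(so that their intersection is an affine subspace of the right dimension), and no
`d+1` hyperplanes have a common point. -/
def GeneralPosition : Prop :=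
  (∀ A : Finset (Fin n), A.card ≤ d →
      LinearIndependent ℝ (fun i : A => 𝓗.normal i.1)) ∧
  (∀ A : Finset (Fin n), A.card = d + 1 → (⋂ i ∈ A, 𝓗.H i) = ∅)

/-- Hyperplane `e` separates `C` from `C'`. -/
def Separates (e : Fin n) (C C' : Set (Fin d → ℝ)) : Prop :=
  (C ⊆ 𝓗.pos e ∧ C' ⊆ 𝓗.neg e) ∨ (C ⊆ 𝓗.neg e ∧ C' ⊆ 𝓗.pos e)

/-- Adjacency in the chamber graph: two chambers are adjacent iff they are separated
by exactly one hyperplane (equivalently, share a common facet). -/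
def Adj (C C' : Set (Fin d → ℝ)) : Prop :=
  C ∈ 𝓗.chambers ∧ C' ∈ 𝓗.chambers ∧ ∃! e : Fin n, 𝓗.Separates e C C'

/-- The edge boundary of a set `S` of chambers, encoded as the set of ordered pairs
`(C, C')` of adjacent chambers with `C ∈ S` and `C' ∉ S` (each boundary edge is thus
counted exactly once). -/
def edgeBoundary (S : Set (Set (Fin d → ℝ))) :
    Set ((Set (Fin d → ℝ)) × (Set (Fin d → ℝ))) :=
  {q | q.1 ∈ S ∧ q.2 ∉ S ∧ 𝓗.Adj q.1 q.2}

/-- The stratum `T_S(A) = T_S ∩ L_A`. -/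
def stratum (S : Set (Set (Fin d → ℝ))) (A : Finset (Fin n)) : Set (Fin d → ℝ) :=
  thickening S ∩ ⋂ i ∈ A, 𝓗.H i

/-- The support of `S`: those `A` with nonempty stratum. -/
def supp (S : Set (Set (Fin d → ℝ))) : Set (Finset (Fin n)) :=
  {A | (𝓗.stratum S A).Nonempty}

/-- `H_f` bounds the stratum `T_S(A)`: the stratum lies entirely in one of the open
half-spaces of `H_f`, and `H_f` meets the closure of the stratum within `L_A`. -/
def Bounds (f : Fin n) (S : Set (Set (Fin d → ℝ))) (A : Finset (Fin n)) : Prop :=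
  (𝓗.stratum S A ⊆ 𝓗.pos f ∨ 𝓗.stratum S A ⊆ 𝓗.neg f) ∧
  (𝓗.H f ∩ closure (𝓗.stratum S A) ∩ ⋂ i ∈ A, 𝓗.H i).Nonempty

/-- `S` is strata-connected if every nonempty stratum is connected. -/
def StrataConnected (S : Set (Set (Fin d → ℝ))) : Prop :=
  ∀ A ∈ 𝓗.supp S, IsConnected (𝓗.stratum S A)

end Arrangement

/-- The generalized binomial coefficient `C(x, i) = x(x-1)⋯(x-i+1)/i!`. -/
noncomputable def gchoose (x : ℝ) (i : ℕ) : ℝ :=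
  (∏ j ∈ Finset.range i, (x - j)) / (Nat.factorial i)


lemma gchoose_zero (x : ℝ) : gchoose x 0 = 1 := by simp [gchoose]

lemma gchoose_succ (x : ℝ) (i : ℕ) :
    gchoose x (i+1) = gchoose x i * ((x - i) / (i+1)) := by
  unfold gchoose
  rw [Finset.prod_range_succ, Nat.factorial_succ]
  have : (Nat.factorial i : ℝ) ≠ 0 := by positivity
  push_cast
  field_simp

lemma gchoose_pascal (x : ℝ) (i : ℕ) :
    gchoose (x+1) (i+1) = gchoose x (i+1) + gchoose x i := by
  induction i with
  | zero => simp [gchoose]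
  | succ i ih =>
    rw [gchoose_succ (x+1) (i+1), ih, gchoose_succ x (i+1), gchoose_succ x i]
    push_cast
    field_simp
    ring

lemma gchoose_nonneg {x : ℝ} {i : ℕ} (h : (i:ℝ) - 1 ≤ x) : 0 ≤ gchoose x i := by
  unfold gchoose
  apply div_nonneg _ (by positivity)
  apply Finset.prod_nonneg
  intro j hj
  have : (j:ℝ) + 1 ≤ i := by exact_mod_cast Finset.mem_range.1 hj
  linarith

lemma gchoose_mono {x y : ℝ} {i : ℕ} (h : (i:ℝ) - 1 ≤ x) (hxy : x ≤ y) :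
    gchoose x i ≤ gchoose y i := by
  unfold gchoose
  apply div_le_div_of_nonneg_right _ (by positivity)
  apply Finset.prod_le_prod
  · intro j hj
    have : (j:ℝ) + 1 ≤ i := by exact_mod_cast Finset.mem_range.1 hj
    linarith
  · intro j hj
    linarith

lemma gchoose_nat (N i : ℕ) : gchoose (N:ℝ) i = (N.choose i : ℝ) := by
  induction N generalizing i with
  | zero =>
    cases i with
    | zero => simp [gchoose]
    | succ i => simp [gchoose, Finset.prod_range_succ']
  | succ N ih =>
    cases i with
    | zero => simp [gchoose]
    | succ i =>
      push_cast
      rw [gchoose_pascal, ih, ih, Nat.choose_succ_succ]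
      push_cast; ring

/-- partial sums -/
def gsum (j : ℕ) (x : ℝ) : ℝ := ∑ i ∈ Finset.range (j+1), gchoose x i

lemma gsum_pascal (j : ℕ) (x : ℝ) : gsum (j+1) (x+1) = gsum (j+1) x + gsum j x := by
  unfold gsum
  rw [Finset.sum_range_succ' _ (j+1), Finset.sum_range_succ' (fun i => gchoose x i) (j+1)]
  simp_rw [gchoose_pascal]
  rw [Finset.sum_add_distrib]
  simp only [gchoose_zero]
  ring

lemma gsum_mono {j : ℕ} {x y : ℝ} (h : (j:ℝ) - 1 ≤ x) (hxy : x ≤ y) : gsum j x ≤ gsum j y := by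
  apply Finset.sum_le_sum
  intro i hi
  apply gchoose_mono _ hxy
  have : (i:ℝ) ≤ j := by exact_mod_cast Nat.lt_succ_iff.1 (Finset.mem_range.1 hi)
  linarith

lemma gsum_strict {j : ℕ} {x y : ℝ} (hj : 1 ≤ j) (h : (j:ℝ) - 1 ≤ x) (hxy : x < y) :
    gsum j x < gsum j y := by
  apply Finset.sum_lt_sum
  · intro i hi
    apply gchoose_mono _ hxy.le
    have : (i:ℝ) ≤ j := by exact_mod_cast Nat.lt_succ_iff.1 (Finset.mem_range.1 hi)
    linarith
  · refine ⟨1, by simp; omega, ?_⟩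
    simpa [gchoose] using hxy

lemma gsum_nonneg {j : ℕ} {x : ℝ} (h : (j:ℝ) - 1 ≤ x) : 0 ≤ gsum j x := by
  apply Finset.sum_nonneg
  intro i hi
  apply gchoose_nonneg
  have : (i:ℝ) ≤ j := by exact_mod_cast Nat.lt_succ_iff.1 (Finset.mem_range.1 hi)
  linarith

lemma gsum_shift (j : ℕ) (x : ℝ) (h : (j:ℝ) - 1 ≤ x) :
    ∑ i ∈ Finset.range (j+1), gsum i x ≤ gsum j (x + j) := by
  induction j with
  | zero => simp
  | succ j ih =>
    rw [Finset.sum_range_succ]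
    push_cast at h ⊢
    have h1 := ih (by linarith)
    have h2 : gsum (j+1) (x + (j+1)) = gsum (j+1) (x + j) + gsum j (x+j) := by
      rw [← gsum_pascal]; ring_nf
    have h3 : gsum (j+1) x ≤ gsum (j+1) (x+j) := by
      apply gsum_mono
      · push_cast; linarith
      · have : (0:ℝ) ≤ j := by positivity
        linarith
    linarith

open Finset in
lemma exists_initSeg {n r : ℕ} (m : ℕ) (hm : m ≤ n.choose r) :
    ∃ C : Finset (Finset (Fin n)), Finset.Colex.IsInitSeg C r ∧ C.card = m := by
  induction m with
  | zero => exact ⟨∅, Finset.Colex.isInitSeg_empty, rfl⟩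
  | succ m ih =>
    obtain ⟨C, hC, hc⟩ := ih (by omega)
    have hne : ((Finset.powersetCard r (Finset.univ : Finset (Fin n))) \ C).Nonempty := by
      rw [← Finset.card_pos]
      have := Finset.le_card_sdiff C (Finset.powersetCard r (Finset.univ : Finset (Fin n)))
      rw [Finset.card_powersetCard, Finset.card_univ, Fintype.card_fin] at this
      omega
    obtain ⟨s, hs, hmin⟩ := Finset.exists_min_image _ (fun s => toColex s) hne
    simp only [Finset.mem_sdiff, Finset.mem_powersetCard, Finset.subset_univ, true_and] at hs hmin
    refine ⟨insert s C, ⟨?_, ?_⟩, by rw [Finset.card_insert_of_notMem hs.2, hc]⟩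
    · intro t ht
      simp only [Finset.coe_insert, Set.mem_insert_iff, Finset.mem_coe] at ht
      rcases ht with rfl | ht
      · exact hs.1
      · exact hC.1 ht
    · rintro t₁ t₂ ht ⟨hlt, hcard⟩
      rw [Finset.mem_insert] at ht ⊢
      right
      rcases ht with rfl | ht
      · by_contra hcon
        exact absurd (hmin t₂ ⟨hcard, hcon⟩) (not_le.2 hlt)
      · exact hC.2 ht ⟨hlt, hcard⟩

open Finset in
open scoped FinsetFamily in
lemma lovasz_kk {n : ℕ} (r : ℕ) : ∀ (c : ℕ) (x : ℝ) (A : Finset (Finset (Fin n))),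
    A.card = c → (A : Set (Finset (Fin n))).Sized (r+1) → A.Nonempty → (r:ℝ) ≤ x →
    gchoose x (r+1) ≤ A.card → gchoose x r ≤ (∂ A).card := by
  induction r with
  | zero =>
    intro c x A _ hA hne _ _
    rw [gchoose_zero]
    have : 0 < (∂ A).card := by
      rw [Finset.card_pos]
      obtain ⟨s, hs⟩ := hne
      have := hA hs
      obtain ⟨a, ha⟩ : s.Nonempty := by rw [← Finset.card_pos]; omega
      exact ⟨s.erase a, Finset.erase_mem_shadow hs ha⟩
    exact_mod_cast this
  | succ r ihr =>
    intro c
    induction c using Nat.strong_induction_on with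
    | _ c ihc =>
    intro x A hc hA hne hx hge
    obtain ⟨C, hC, hCA⟩ := exists_initSeg (n := n) (r := r+1+1) A.card (by
      have := hA.card_le
      simpa using this)
    have hkk := Finset.kruskal_katona hA hCA.le hC
    have hCne : C.Nonempty := by rw [← Finset.card_pos, hCA, Finset.card_pos]; exact hne
    rcases n with _ | n
    · obtain ⟨s, hs⟩ := hne
      have := hA hs
      have h2 := Finset.card_le_univ s
      simp at h2
      simp [h2] at this
    set C1 := C.memberSubfamily 0 with hC1
    set C0 := C.nonMemberSubfamily 0 with hC0
    have hsum : C1.card + C0.card = C.card :=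
      Finset.card_memberSubfamily_add_card_nonMemberSubfamily 0 C
    have hC1s : (C1 : Set (Finset (Fin (n+1)))).Sized (r+1) := by
      intro s hs
      rw [Finset.mem_coe, hC1, Finset.mem_memberSubfamily] at hs
      have := hC.1 hs.1
      rw [Finset.card_insert_of_notMem hs.2] at this
      omega
    have hC0s : (C0 : Set (Finset (Fin (n+1)))).Sized (r+1+1) := by
      intro s hs
      rw [Finset.mem_coe, hC0, Finset.mem_nonMemberSubfamily] at hs
      exact hC.1 hs.1
    have hsh : ∂ C0 ⊆ C1 := by
      intro t ht
      rw [Finset.mem_shadow_iff] at ht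
      obtain ⟨s, hs, a, ha, rfl⟩ := ht
      rw [hC0, Finset.mem_nonMemberSubfamily] at hs
      rw [hC1, Finset.mem_memberSubfamily]
      have h0 : (0 : Fin (n+1)) ∉ s.erase a := fun h => hs.2 (Finset.mem_of_mem_erase h)
      refine ⟨?_, h0⟩
      have ha0 : 0 < a := by
        rw [Fin.pos_iff_ne_zero]
        rintro rfl
        exact hs.2 ha
      refine hC.2 hs.1 ⟨?_, ?_⟩
      · have := (Finset.Colex.insert_lt_insert h0 (Finset.notMem_erase a s)).2 ha0
        rwa [Finset.insert_erase ha] at this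
      · rw [Finset.card_insert_of_notMem h0, Finset.card_erase_of_mem ha, hC.1 hs.1]
        rfl
    have hC1ne : C1.Nonempty := by
      by_contra hcon
      rw [Finset.not_nonempty_iff_eq_empty] at hcon
      rw [hcon, Finset.card_empty, zero_add] at hsum
      have h0ne : C0.Nonempty := by
        rw [← Finset.card_pos, hsum, Finset.card_pos]; exact hCne
      obtain ⟨s, hs⟩ := h0ne
      have h3 := hC0s hs
      obtain ⟨a, ha⟩ : s.Nonempty := by rw [← Finset.card_pos]; omega
      have := hsh (Finset.erase_mem_shadow hs ha)
      rw [hcon] at this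
      simp at this
    have hC1pos : 1 ≤ C1.card := Finset.card_pos.2 hC1ne
    have hpas : gchoose x (r+1+1) = gchoose (x-1) (r+1+1) + gchoose (x-1) (r+1) := by
      rw [← gchoose_pascal]; ring_nf
    have hpas' : gchoose x (r+1) = gchoose (x-1) (r+1) + gchoose (x-1) r := by
      rw [← gchoose_pascal]; ring_nf
    push_cast at hx
    have hC1big : gchoose (x-1) (r+1) ≤ C1.card := by
      rcases lt_or_ge x (r+1+1) with hxr | hxr
      · have h1 : gchoose (x-1) (r+1) ≤ gchoose ((r+1 : ℕ):ℝ) (r+1) := by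
          apply gchoose_mono <;> push_cast <;> linarith
        rw [gchoose_nat, Nat.choose_self] at h1
        have : (1:ℝ) ≤ C1.card := by exact_mod_cast hC1pos
        push_cast at h1
        linarith
      · by_contra hcon
        push Not at hcon
        have hge' : gchoose (x-1) (r+1+1) < C0.card := by
          have e : (C1.card : ℝ) + C0.card = A.card := by
            rw [← hCA, ← hsum]; push_cast; ring
          linarith
        have hnn : 0 ≤ gchoose (x-1) (r+1+1) := by
          apply gchoose_nonneg; push_cast; linarith
        have hC0ne : C0.Nonempty := by
          rw [← Finset.card_pos]
          have : (0:ℝ) < C0.card := by linarith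
          exact_mod_cast this
        have := ihc C0.card (by omega) (x-1) C0 rfl hC0s hC0ne (by push_cast; linarith) hge'.le
        have h5 : ((∂ C0).card : ℝ) ≤ C1.card := by exact_mod_cast Finset.card_le_card hsh
        linarith
    have hC1sh := ihr C1.card (x-1) C1 rfl hC1s hC1ne (by linarith) hC1big
    have hfin : C1.card + (∂ C1).card ≤ (∂ C).card := by
      have hno : ∀ t ∈ ∂ C1, (0 : Fin (n+1)) ∉ t := by
        intro t ht
        rw [Finset.mem_shadow_iff] at ht
        obtain ⟨s, hs, a, ha, rfl⟩ := ht
        rw [hC1, Finset.mem_memberSubfamily] at hs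
        exact fun h => hs.2 (Finset.mem_of_mem_erase h)
      have hinj : Set.InjOn (insert (0 : Fin (n+1))) ((∂ C1 : Finset (Finset (Fin (n+1)))) : Set (Finset (Fin (n+1)))) := by
        intro s hs t ht h
        have := congrArg (fun u => u.erase 0) h
        simpa [Finset.erase_insert (hno s hs), Finset.erase_insert (hno t ht)] using this
      rw [← Finset.card_image_of_injOn hinj, ← Finset.card_union_of_disjoint]
      · apply Finset.card_le_card
        apply Finset.union_subset
        · intro s hs
          rw [hC1, Finset.mem_memberSubfamily] at hs
          have := Finset.erase_mem_shadow hs.1 (Finset.mem_insert_self 0 s)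
          rwa [Finset.erase_insert hs.2] at this
        · intro u hu
          rw [Finset.mem_image] at hu
          obtain ⟨t, ht, rfl⟩ := hu
          have ht0 := hno t ht
          rw [Finset.mem_shadow_iff] at ht
          obtain ⟨s, hs, a, ha, rfl⟩ := ht
          rw [hC1, Finset.mem_memberSubfamily] at hs
          have ha0 : a ≠ 0 := by rintro rfl; exact hs.2 ha
          have := Finset.erase_mem_shadow hs.1 (Finset.mem_insert_of_mem (b := 0) ha)
          rwa [Finset.erase_insert_of_ne ha0.symm] at this
      · rw [Finset.disjoint_left]
        intro s hs hs'
        rw [Finset.mem_image] at hs'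
        obtain ⟨t, ht, rfl⟩ := hs'
        rw [hC1, Finset.mem_memberSubfamily] at hs
        exact hs.2 (Finset.mem_insert_self _ _)
    have h6 : (C1.card : ℝ) + (∂ C1).card ≤ (∂ A).card := by
      exact_mod_cast hfin.trans hkk
    rw [hpas']
    linarith

/-- number of members of size `i` -/
def lev {n : ℕ} (D : Finset (Finset (Fin n))) (i : ℕ) : Finset (Finset (Fin n)) :=
  D.filter (fun C => C.card = i)

open scoped FinsetFamily in
lemma lev_down {n : ℕ} (D : Finset (Finset (Fin n))) (hD : ∀ s ∈ D, ∀ t ⊆ s, t ∈ D)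
    (x : ℝ) (i e : ℕ) (hx : ((i+e : ℕ):ℝ) - 1 ≤ x) (hne : (lev D (i+e)).Nonempty)
    (h : gchoose x (i+e) ≤ (lev D (i+e)).card) : gchoose x i ≤ (lev D i).card := by
  induction e with
  | zero => exact h
  | succ e ih =>
    have hs : ((lev D (i+e+1) : Finset (Finset (Fin n))) : Set (Finset (Fin n))).Sized (i+e+1) := by
      intro s hs
      simp [lev] at hs
      exact hs.2
    have hsub : ∂ (lev D (i+e+1)) ⊆ lev D (i+e) := by
      intro t ht
      rw [Finset.mem_shadow_iff] at ht
      obtain ⟨s, hs, a, ha, rfl⟩ := ht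
      simp only [lev, Finset.mem_filter] at hs ⊢
      refine ⟨hD s hs.1 _ (Finset.erase_subset _ _), ?_⟩
      rw [Finset.card_erase_of_mem ha, hs.2]; rfl
    have hx' : ((i+e : ℕ):ℝ) ≤ x := by push_cast at hx ⊢; linarith
    have := lovasz_kk (i+e) _ x (lev D (i+e+1)) rfl hs hne hx' h
    have h2 : ((∂ (lev D (i+e+1))).card : ℝ) ≤ (lev D (i+e)).card := by
      exact_mod_cast Finset.card_le_card hsub
    apply ih
    · linarith
    · obtain ⟨s, hss⟩ := hne
      obtain ⟨a, ha⟩ : s.Nonempty := by rw [← Finset.card_pos]; have := hs hss; omega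
      exact ⟨_, hsub (Finset.erase_mem_shadow hss ha)⟩
    · linarith

lemma card_le_eq_sum {n : ℕ} (D : Finset (Finset (Fin n))) (j : ℕ) :
    (D.filter (fun C => C.card ≤ j)).card = ∑ i ∈ Finset.range (j+1), (lev D i).card := by
  rw [Finset.card_eq_sum_card_fiberwise (f := Finset.card) (t := Finset.range (j+1))]
  · apply Finset.sum_congr rfl
    intro i hi
    rw [Finset.mem_range] at hi
    congr 1
    ext C
    simp only [lev, Finset.mem_filter]
    constructor
    · rintro ⟨⟨h, _⟩, h2⟩; exact ⟨h, h2⟩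
    · rintro ⟨h, h2⟩; exact ⟨⟨h, by omega⟩, h2⟩
  · intro C hC
    simp at hC ⊢
    omega

lemma kk_partial {n d : ℕ} (D : Finset (Finset (Fin n))) (hD : ∀ s ∈ D, ∀ t ⊆ s, t ∈ D)
    (hd : ∀ s ∈ D, s.card ≤ d) (k : ℝ) (hk : (d:ℝ) - 1 ≤ k) (hcard : (D.card : ℝ) = gsum d k)
    (j : ℕ) (hj : j ≤ d) : gsum j k ≤ ((D.filter (fun C => C.card ≤ j)).card : ℝ) := by
  by_contra hcon
  push Not at hcon
  have hDd : D.card = ∑ i ∈ Finset.range (d+1), (lev D i).card := by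
    rw [← card_le_eq_sum, Finset.filter_true_of_mem hd]
  rw [hDd] at hcard
  rw [card_le_eq_sum] at hcon
  unfold gsum at hcon hcard
  push_cast at hcon hcard
  obtain ⟨i, hi, hlt⟩ := Finset.exists_lt_of_sum_lt hcon
  rw [Finset.mem_range] at hi
  have key : ∀ i', i ≤ i' → i' ≤ d → ((lev D i').card : ℝ) ≤ gchoose k i' := by
    intro i' h1 h2
    by_contra hc
    push Not at hc
    obtain ⟨e, rfl⟩ := Nat.exists_eq_add_of_le h1
    have hx : ((i+e : ℕ):ℝ) - 1 ≤ k := by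
      have : ((i+e : ℕ):ℝ) ≤ d := by exact_mod_cast h2
      linarith
    have h0 := gchoose_nonneg hx
    have hpos : (0:ℝ) < (lev D (i+e)).card := by linarith
    have := lev_down D hD k i e hx (Finset.card_pos.1 (by exact_mod_cast hpos)) hc.le
    linarith
  rw [← Finset.sum_range_add_sum_Ico _ (show j+1 ≤ d+1 by omega),
    ← Finset.sum_range_add_sum_Ico (fun i => gchoose k i) (show j+1 ≤ d+1 by omega)] at hcard
  have : ∑ i ∈ Finset.Ico (j+1) (d+1), ((lev D i).card : ℝ) ≤ ∑ i ∈ Finset.Ico (j+1) (d+1), gchoose k i := by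
    apply Finset.sum_le_sum
    intro i' hi'
    rw [Finset.mem_Ico] at hi'
    exact key i' (by omega) (by omega)
  linarith

lemma sum_gsum (d : ℕ) (k : ℝ) :
    ∑ i ∈ Finset.range d, ((d : ℝ) - i) * gchoose k i = ∑ j ∈ Finset.range d, gsum j k := by
  induction d with
  | zero => simp
  | succ d ih =>
    rw [Finset.sum_range_succ (fun j => gsum j k), ← ih, gsum, Finset.sum_range_succ, Finset.sum_range_succ (fun i => gchoose k i),
      ← add_assoc, ← Finset.sum_add_distrib]
    push_cast
    congr 1
    · apply Finset.sum_congr rfl; intros; ring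
    · ring

/-- final combinatorial inequality -/
lemma comb_main {n d : ℕ} (D : Finset (Finset (Fin n))) (hD : ∀ s ∈ D, ∀ t ⊆ s, t ∈ D)
    (hd : ∀ s ∈ D, s.card ≤ d) (k : ℝ) (hk : (d:ℝ) - 1 ≤ k) (hcard : (D.card : ℝ) = gsum d k)
    (M : Finset (Fin n)) (hM : 1 ≤ M.card) (hall : ∀ s : Finset (Fin n), Disjoint s M → s.card + M.card ≤ d → s ∈ D)
    (hkn : k ≤ (n:ℝ) - d) :
    ∑ i ∈ Finset.range d, ((d : ℝ) - i) * gchoose k i ≤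
      ((∑ C ∈ D, min M.card (d - C.card) : ℕ) : ℝ) := by
  set m := M.card with hm
  have e1 : ∑ C ∈ D, min m (d - C.card)
      = ∑ j ∈ Finset.Ico (d - m) d, (D.filter (fun C => C.card ≤ j)).card := by
    have : ∀ C ∈ D, min m (d - C.card) = ((Finset.Ico (d-m) d).filter (fun j => C.card ≤ j)).card := by
      intro C hC
      have : (Finset.Ico (d-m) d).filter (fun j => C.card ≤ j) = Finset.Ico (max (d-m) C.card) d := by
        ext j; simp only [Finset.mem_filter, Finset.mem_Ico]; omega
      rw [this, Nat.card_Ico]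
      have := hd C hC
      omega
    rw [Finset.sum_congr rfl this]
    simp_rw [Finset.card_filter]
    rw [Finset.sum_comm]
  have hp := kk_partial D hD hd k hk hcard
  rw [sum_gsum, e1]
  push_cast
  rcases le_or_gt d m with h | h
  · rw [Nat.sub_eq_zero_of_le h, Finset.range_eq_Ico]
    apply Finset.sum_le_sum
    intro j hj
    rw [Finset.mem_Ico] at hj
    exact hp j hj.2.le
  · obtain ⟨j0, hj0⟩ : ∃ j0, d = m + j0 := ⟨d - m, by omega⟩
    have hd0 : d - m = j0 := by omega
    rw [hd0, ← Finset.sum_range_add_sum_Ico _ (show j0 + 1 ≤ d by omega),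
      Finset.sum_eq_sum_Ico_succ_bot (show j0 < d by omega)]
    apply add_le_add
    · have hkj : ((j0:ℝ)) - 1 ≤ k := by
        have : (j0:ℝ) ≤ d := by exact_mod_cast (show j0 ≤ d by omega)
        linarith
      have hmn : m ≤ n := by simpa using Finset.card_le_univ M
      have h1 := gsum_shift j0 k hkj
      have h2 : gsum j0 (k + j0) ≤ gsum j0 ((n - m : ℕ) : ℝ) := by
        apply gsum_mono
        · have : (0:ℝ) ≤ j0 := by positivity
          linarith
        · rw [Nat.cast_sub hmn]
          have : (d:ℝ) = m + j0 := by exact_mod_cast hj0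
          linarith
      have h3 : gsum j0 ((n - m : ℕ) : ℝ) ≤ ((D.filter (fun C => C.card ≤ j0)).card : ℝ) := by
        unfold gsum
        simp_rw [gchoose_nat]
        have : ∑ i ∈ Finset.range (j0+1), (n-m).choose i ≤ (D.filter (fun C => C.card ≤ j0)).card := by
          rw [card_le_eq_sum]
          apply Finset.sum_le_sum
          intro i hi
          rw [Finset.mem_range] at hi
          have hc : (Mᶜ).card = n - m := by rw [Finset.card_compl, Fintype.card_fin]
          rw [← hc, ← Finset.card_powersetCard]
          apply Finset.card_le_card
          intro s hs
          rw [Finset.mem_powersetCard] at hs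
          simp only [lev, Finset.mem_filter]
          refine ⟨hall s ?_ (by omega), hs.2⟩
          rw [Finset.disjoint_left]
          intro a ha
          exact Finset.mem_compl.1 (hs.1 ha)
        exact_mod_cast this
      linarith
    · apply Finset.sum_le_sum
      intro j hj
      rw [Finset.mem_Ico] at hj
      exact hp j hj.2.le

/-- from the cardinality bound deduce `k ≤ n - d` -/
lemma k_le {n d : ℕ} (hd : 1 ≤ d) (k : ℝ) (hk : (d:ℝ) - 1 ≤ k) (N : ℝ) (hN : N = gsum d k)
    (hle : N ≤ gsum d ((n:ℝ) - d)) (hpow : N ≤ 2 ^ (n - 1)) (hn : 1 ≤ n) : k ≤ (n:ℝ) - d := by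
  have hpowd : (2:ℝ) ^ (d-1) ≤ N := by
    have h1 : gsum d ((d-1 : ℕ) : ℝ) = 2^(d-1) := by
      unfold gsum
      simp_rw [gchoose_nat]
      rw [Finset.sum_range_succ, Nat.choose_eq_zero_of_lt (by omega)]
      have := Nat.sum_range_choose (d-1)
      rw [Nat.sub_add_cancel hd] at this
      simp
      exact_mod_cast this
    rw [← h1, hN]
    apply gsum_mono <;> rw [Nat.cast_sub hd] <;> simp
    linarith
  have hdn : d ≤ n := by
    have := (hpowd.trans hpow)
    have := (pow_le_pow_iff_right₀ (by norm_num : (1:ℝ) < 2)).1 this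
    omega
  have h2 : d - 1 ≤ n - d := by
    have h3 : gsum d ((n:ℝ) - d) ≤ 2 ^ (n-d) := by
      rw [← Nat.cast_sub hdn]
      unfold gsum
      simp_rw [gchoose_nat]
      have : ∑ i ∈ Finset.range (d+1), (n-d).choose i ≤ 2^(n-d) := by
        rw [← Nat.sum_range_choose (n-d)]
        rcases le_total (d+1) (n-d+1) with h | h
        · exact Finset.sum_le_sum_of_subset (Finset.range_mono h)
        · rw [← Finset.sum_range_add_sum_Ico _ h]
          rw [Finset.sum_eq_zero (s := Finset.Ico _ _)]
          · simp
          · intro i hi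
            rw [Finset.mem_Ico] at hi
            exact Nat.choose_eq_zero_of_lt (by omega)
      exact_mod_cast this
    have := ((hpowd.trans hle).trans h3)
    exact (pow_le_pow_iff_right₀ (by norm_num : (1:ℝ) < 2)).1 this
  by_contra hcon
  push Not at hcon
  have h4 : (d:ℝ) - 1 ≤ (n:ℝ) - d := by
    have : ((d - 1 : ℕ):ℝ) ≤ ((n-d : ℕ) : ℝ) := by exact_mod_cast h2
    rwa [Nat.cast_sub hd, Nat.cast_sub hdn, Nat.cast_one] at this
  have := gsum_strict hd h4 hcon
  linarith

/-- numerical lemma for the second part -/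
lemma half_bound {n d : ℕ} (hn : (d : ℝ) ^ 2 / Real.log 2 + 2 * d ≤ (n : ℝ)) :
    gsum d (n:ℝ) ≤ 2 * gsum d ((n:ℝ) - d) := by
  have hlog : 0 < Real.log 2 := Real.log_pos (by norm_num)
  have hq : 0 ≤ (d : ℝ) ^ 2 / Real.log 2 := by positivity
  have hdn : 2 * (d:ℝ) ≤ n := by linarith
  rcases Nat.eq_zero_or_pos d with rfl | hd
  · simp [gsum, gchoose]
  have hd1 : (1:ℝ) ≤ d := by exact_mod_cast hd
  have hq' : 0 < (d : ℝ) ^ 2 / Real.log 2 := by positivity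
  unfold gsum
  rw [Finset.mul_sum]
  apply Finset.sum_le_sum
  intro i hi
  have hi' : (i:ℝ) ≤ d := by exact_mod_cast Nat.lt_succ_iff.1 (Finset.mem_range.1 hi)
  unfold gchoose
  rw [← mul_div_assoc]
  apply div_le_div_of_nonneg_right _ (by positivity)
  set c : ℝ := Real.exp (d / ((n:ℝ) - 2 * d)) with hc
  have hpos : 0 < (n:ℝ) - 2 * d := by linarith
  have step : ∏ j ∈ Finset.range i, ((n:ℝ) - j) ≤ ∏ j ∈ Finset.range i, (c * ((n:ℝ) - d - j)) := by
    apply Finset.prod_le_prod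
    · intro j hj
      have : (j:ℝ) + 1 ≤ i := by exact_mod_cast Finset.mem_range.1 hj
      linarith
    · intro j hj
      have hj' : (j:ℝ) + 1 ≤ i := by exact_mod_cast Finset.mem_range.1 hj
      have h1 : (d / ((n:ℝ) - 2 * d)) + 1 ≤ c := Real.add_one_le_exp _
      have h2 : (n:ℝ) - 2*d ≤ (n:ℝ) - d - j := by linarith
      have h3 : (d:ℝ) ≤ d / ((n:ℝ) - 2 * d) * ((n:ℝ) - d - j) := by
        rw [div_mul_eq_mul_div, le_div_iff₀ hpos]
        exact mul_le_mul_of_nonneg_left h2 (by positivity)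
      have h4 := mul_le_mul_of_nonneg_right h1 (show 0 ≤ (n:ℝ) - d - j by linarith)
      nlinarith
  refine step.trans ?_
  rw [Finset.prod_mul_distrib, Finset.prod_const, Finset.card_range]
  apply mul_le_mul_of_nonneg_right
  · rw [hc, ← Real.exp_nat_mul]
    rw [← Real.le_log_iff_exp_le (by norm_num)]
    have : (d:ℝ)^2 ≤ Real.log 2 * ((n:ℝ) - 2 * d) := by
      have := (div_le_iff₀ hlog).1 (show (d : ℝ) ^ 2 / Real.log 2 ≤ (n:ℝ) - 2*d by linarith)
      linarith
    rw [← mul_div_assoc, div_le_iff₀ hpos]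
    nlinarith
  · apply Finset.prod_nonneg
    intro j hj
    have : (j:ℝ) + 1 ≤ i := by exact_mod_cast Finset.mem_range.1 hj
    linarith

namespace Arrangement

/-- affine functional of the `i`-th hyperplane -/
def ev {d n : ℕ} (𝓗 : Arrangement d n) (i : Fin n) (x : Fin d → ℝ) : ℝ :=
  ∑ j, 𝓗.normal i j * x j - 𝓗.offset i

section geo
variable {d n : ℕ} (𝓗 : Arrangement d n)

lemma ev_cont (i : Fin n) : Continuous (𝓗.ev i) := by
  unfold ev
  fun_prop

lemma ev_comb (i : Fin n) (x y : Fin d → ℝ) (a b : ℝ) (h : a + b = 1) :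
    𝓗.ev i (a • x + b • y) = a * 𝓗.ev i x + b * 𝓗.ev i y := by
  unfold ev
  have : ∑ j, 𝓗.normal i j * (a • x + b • y) j
      = a * ∑ j, 𝓗.normal i j * x j + b * ∑ j, 𝓗.normal i j * y j := by
    rw [Finset.mul_sum, Finset.mul_sum, ← Finset.sum_add_distrib]
    apply Finset.sum_congr rfl
    intro j _
    simp; ring
  rw [this]
  linear_combination (𝓗.offset i) * h

variable {𝓗}

lemma solve (hgp : 𝓗.GeneralPosition) (B : Finset (Fin n)) (hB : B.card ≤ d) (c : Fin n → ℝ) :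
    ∃ x, ∀ i ∈ B, 𝓗.ev i x = c i := by
  have hli := hgp.1 B hB
  obtain ⟨g, hg⟩ := LinearMap.exists_extend
    ((Module.Basis.span hli).constr ℝ (fun i : B => c i.1 + 𝓗.offset i.1))
  refine ⟨fun j => g (Pi.single j 1), fun i hi => ?_⟩
  have h1 : g (𝓗.normal i) = c i + 𝓗.offset i := by
    have h2 := (Module.Basis.span hli).constr_basis ℝ (fun i : B => c i.1 + 𝓗.offset i.1) ⟨i, hi⟩
    rw [← hg] at h2
    simpa [Module.Basis.span_apply] using h2
  have h3 : g (𝓗.normal i) = ∑ j, 𝓗.normal i j * g (Pi.single j 1) := by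
    conv_lhs => rw [pi_eq_sum_univ' (𝓗.normal i)]
    rw [map_sum]
    apply Finset.sum_congr rfl
    intro j _
    rw [map_smul, smul_eq_mul]
  unfold ev
  rw [← h3, h1]
  ring

lemma card_le (hgp : 𝓗.GeneralPosition) (B : Finset (Fin n)) (z : Fin d → ℝ)
    (hz : ∀ i ∈ B, 𝓗.ev i z = 0) : B.card ≤ d := by
  by_contra hcon
  push Not at hcon
  obtain ⟨A, hA, hAc⟩ := Finset.exists_subset_card_eq (show d + 1 ≤ B.card from hcon)
  have := hgp.2 A hAc
  have hz' : z ∈ ⋂ i ∈ A, 𝓗.H i := by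
    simp only [Set.mem_iInter]
    intro i hi
    have := hz i (hA hi)
    unfold ev at this
    simp only [H, Set.mem_ofPred_eq]
    linarith
  rw [this] at hz'
  exact hz'

/-- move off a hyperplane inside a flat -/
lemma move (hgp : 𝓗.GeneralPosition) (U : Set (Fin d → ℝ)) (hU : IsOpen U) (A : Finset (Fin n))
    (b : Fin n) (hb : b ∉ A) (z : Fin d → ℝ) (hz : z ∈ U) (hA : ∀ i ∈ A, 𝓗.ev i z = 0)
    (hbz : 𝓗.ev b z = 0) (s : SignType) (hs : s ≠ 0) :
    ∃ x ∈ U, (∀ i ∈ A, 𝓗.ev i x = 0) ∧ SignType.sign (𝓗.ev b x) = s := by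
  have hc : (insert b A).card ≤ d := by
    apply card_le hgp _ z
    intro i hi
    rw [Finset.mem_insert] at hi
    rcases hi with rfl | hi
    · exact hbz
    · exact hA i hi
  obtain ⟨w, hw⟩ := solve hgp _ hc (fun i => if i = b then (s : ℝ) else 0)
  have hcont : Continuous (fun t : ℝ => (1 - t) • z + t • w) := by fun_prop
  have hopen : IsOpen ((fun t : ℝ => (1 - t) • z + t • w) ⁻¹' U) := hU.preimage hcont
  have h0 : (0:ℝ) ∈ ((fun t : ℝ => (1 - t) • z + t • w) ⁻¹' U) := by simpa using hz
  obtain ⟨ε, hε, hball⟩ := Metric.isOpen_iff.1 hopen 0 h0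
  have hmem : ε / 2 ∈ Metric.ball (0:ℝ) ε := by
    rw [Metric.mem_ball, Real.dist_eq, sub_zero, abs_of_pos (by positivity)]; linarith
  refine ⟨_, hball hmem, ?_, ?_⟩
  · intro i hi
    simp only
    rw [ev_comb _ _ _ _ _ _ (by ring), hA i hi, hw i (Finset.mem_insert_of_mem hi), if_neg]
    · simp
    · rintro rfl; exact hb hi
  · simp only
    rw [ev_comb _ _ _ _ _ _ (by ring), hbz, hw b (Finset.mem_insert_self _ _), if_pos rfl]
    rw [mul_zero, zero_add, sign_mul, sign_pos (by positivity), one_mul]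
    cases s <;> simp_all

/-- crossing lemma -/
lemma crossing (f : Fin n) (x y : Fin d → ℝ) (hx : SignType.sign (𝓗.ev f x) ≠ 0)
    (hxy : SignType.sign (𝓗.ev f x) ≠ SignType.sign (𝓗.ev f y)) :
    ∃ a b : ℝ, 0 ≤ a ∧ 0 < b ∧ a + b = 1 ∧ 𝓗.ev f (a • x + b • y) = 0 := by
  set p := 𝓗.ev f x with hpd
  set q := 𝓗.ev f y with hqd
  have hp : p ≠ 0 := by simpa [sign_eq_zero_iff] using hx
  have hpq : p - q ≠ 0 := by
    intro h; apply hxy; rw [sub_eq_zero.1 h]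
  have hor : (0 < p ∧ q ≤ 0) ∨ (p < 0 ∧ 0 ≤ q) := by
    rcases lt_or_gt_of_ne hp with h | h
    · right
      refine ⟨h, ?_⟩
      by_contra hq
      push Not at hq
      exact hxy (by rw [sign_neg h, sign_neg hq])
    · left
      refine ⟨h, ?_⟩
      by_contra hq
      push Not at hq
      exact hxy (by rw [sign_pos h, sign_pos hq])
  refine ⟨-q/(p-q), p/(p-q), ?_, ?_, ?_, ?_⟩
  · rcases hor with ⟨h1, h2⟩ | ⟨h1, h2⟩
    · exact div_nonneg (by linarith) (by linarith)
    · exact div_nonneg_of_nonpos (by linarith) (by linarith)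
  · rcases hor with ⟨h1, h2⟩ | ⟨h1, h2⟩
    · exact div_pos (by linarith) (by linarith)
    · exact div_pos_of_neg_of_neg (by linarith) (by linarith)
  · field_simp; ring
  · rw [ev_comb _ _ _ _ _ _ (by field_simp; ring), ← hpd, ← hqd]
    field_simp; ring

lemma sgn_comb {a b p q : ℝ} (ha : 0 ≤ a) (hb : 0 ≤ b) (hab : a + b = 1) {s : SignType}
    (hp : SignType.sign p = s) (hq : SignType.sign q = s) : SignType.sign (a * p + b * q) = s := by
  subst hp
  rcases lt_trichotomy p 0 with h | h | h
  · rw [sign_neg h] at hq ⊢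
    rw [sign_eq_neg_one_iff] at hq ⊢
    rcases ha.lt_or_eq with h1 | h1
    · nlinarith [mul_neg_of_pos_of_neg h1 h, mul_nonneg hb (neg_nonneg.2 hq.le)]
    · rw [← h1] at hab ⊢
      simp at hab
      rw [hab]; linarith
  · subst h
    rw [sign_zero, sign_eq_zero_iff] at hq
    simp [hq]
  · rw [sign_pos h] at hq ⊢
    rw [sign_eq_one_iff] at hq ⊢
    rcases ha.lt_or_eq with h1 | h1
    · nlinarith [mul_pos h1 h, mul_nonneg hb hq.le]
    · rw [← h1] at hab ⊢
      simp at hab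
      rw [hab]; linarith

lemma sgn_pos_mul {b q : ℝ} (hb : 0 < b) : SignType.sign (b * q) = SignType.sign q := by
  rw [sign_mul, sign_pos hb, one_mul]

/-- set of points with prescribed signs -/
def reg (𝓗 : Arrangement d n) (B : Finset (Fin n)) (s : Fin n → SignType) : Set (Fin d → ℝ) :=
  {x | ∀ i ∈ B, SignType.sign (𝓗.ev i x) = s i}

lemma mem_reg {B : Finset (Fin n)} {s : Fin n → SignType} {x : Fin d → ℝ} :
    x ∈ 𝓗.reg B s ↔ ∀ i ∈ B, SignType.sign (𝓗.ev i x) = s i := Iff.rfl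

lemma reg_convex (B : Finset (Fin n)) (s : Fin n → SignType) : Convex ℝ (𝓗.reg B s) := by
  intro x hx y hy a b ha hb hab i hi
  rw [ev_comb _ _ _ _ _ _ hab]
  exact sgn_comb ha hb hab (hx i hi) (hy i hi)

lemma isOpen_sign {s : SignType} (hs : s ≠ 0) : IsOpen {r : ℝ | SignType.sign r = s} := by
  cases s
  · exact absurd rfl hs
  · have : {r : ℝ | SignType.sign r = SignType.neg} = Set.Iio 0 := by
      ext r; exact sign_eq_neg_one_iff
    rw [this]; exact isOpen_Iio
  · have : {r : ℝ | SignType.sign r = SignType.pos} = Set.Ioi 0 := by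
      ext r; exact sign_eq_one_iff
    rw [this]; exact isOpen_Ioi

lemma reg_open (B : Finset (Fin n)) (s : Fin n → SignType) (hs : ∀ i ∈ B, s i ≠ 0) :
    IsOpen (𝓗.reg B s) := by
  have : 𝓗.reg B s = ⋂ i ∈ B, (𝓗.ev i) ⁻¹' {r : ℝ | SignType.sign r = s i} := by
    ext x; simp [reg]
  rw [this]
  exact isOpen_biInter_finset (fun i hi => (isOpen_sign (hs i hi)).preimage (𝓗.ev_cont i))

lemma neg_sign_ne {s : SignType} (hs : s ≠ 0) : -s ≠ 0 ∧ -s ≠ s := by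
  cases s <;> simp_all

/-- irredundant walls -/
lemma walls (hgp : 𝓗.GeneralPosition) (M A : Finset (Fin n)) (hMA : Disjoint A M)
    (s : Fin n → SignType) (hs : ∀ i ∈ M, s i ≠ 0) (y : Fin d → ℝ) (hyA : ∀ i ∈ A, 𝓗.ev i y = 0)
    (hyM : y ∈ 𝓗.reg M s) :
    ∃ N ⊆ M, (∀ x, (∀ i ∈ A, 𝓗.ev i x = 0) → x ∈ 𝓗.reg N s → x ∈ 𝓗.reg M s) ∧
      ∀ f ∈ N, ∃ z ∈ 𝓗.reg (M.erase f) s, (∀ i ∈ A, 𝓗.ev i z = 0) ∧ 𝓗.ev f z = 0 := by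
  classical
  set Q := M.powerset.filter
    (fun N => ∀ x, (∀ i ∈ A, 𝓗.ev i x = 0) → x ∈ 𝓗.reg N s → x ∈ 𝓗.reg M s) with hQ
  have hQne : Q.Nonempty := ⟨M, by simp [hQ]⟩
  obtain ⟨N, hN, hmin⟩ := Finset.exists_min_image Q Finset.card hQne
  rw [hQ, Finset.mem_filter, Finset.mem_powerset] at hN
  refine ⟨N, hN.1, hN.2, fun f hf => ?_⟩
  have hfM := hN.1 hf
  have hfA : f ∉ A := fun h => Finset.disjoint_left.1 hMA h hfM
  have hnot : ¬ (∀ x, (∀ i ∈ A, 𝓗.ev i x = 0) → x ∈ 𝓗.reg (N.erase f) s → x ∈ 𝓗.reg M s) := by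
    intro h
    have := hmin (N.erase f) (by
      rw [hQ, Finset.mem_filter, Finset.mem_powerset]
      exact ⟨(Finset.erase_subset _ _).trans hN.1, h⟩)
    have := Finset.card_erase_lt_of_mem hf
    omega
  push Not at hnot
  obtain ⟨x, hxA, hxN, hxM⟩ := hnot
  have hxf : SignType.sign (𝓗.ev f x) ≠ s f := by
    intro h
    apply hxM
    apply hN.2 x hxA
    intro i hi
    by_cases hif : i = f
    · subst hif; exact h
    · exact hxN i (Finset.mem_erase.2 ⟨hif, hi⟩)
  obtain ⟨a, b, ha, hb, hab, hz⟩ := crossing (𝓗 := 𝓗) f y x (by rw [hyM f hfM]; exact hs f hfM)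
    (by rw [hyM f hfM]; exact hxf.symm)
  set z := a • y + b • x with hzd
  have hzA : ∀ i ∈ A, 𝓗.ev i z = 0 := by
    intro i hi
    rw [hzd, ev_comb _ _ _ _ _ _ hab, hyA i hi, hxA i hi]; simp
  have hzN : z ∈ 𝓗.reg (N.erase f) s := by
    apply reg_convex _ _ _ hxN ha hb.le hab
    intro i hi
    exact hyM i (hN.1 (Finset.mem_of_mem_erase hi))
  refine ⟨z, ?_, hzA, hz⟩
  intro g hg
  have hgM := Finset.mem_of_mem_erase hg
  have hgf := Finset.ne_of_mem_erase hg
  by_contra hcon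
  obtain ⟨z', hz'N, hz'A, hz's, hz'0⟩ : ∃ z' ∈ 𝓗.reg (N.erase f) s,
      (∀ i ∈ insert f A, 𝓗.ev i z' = 0) ∧ SignType.sign (𝓗.ev g z') ≠ s g ∧
        SignType.sign (𝓗.ev g z') ≠ 0 := by
    have hzfA : ∀ i ∈ insert f A, 𝓗.ev i z = 0 := by
      intro i hi
      rw [Finset.mem_insert] at hi
      rcases hi with rfl | hi
      · exact hz
      · exact hzA i hi
    by_cases h0 : 𝓗.ev g z = 0
    · obtain ⟨h1, h2⟩ := neg_sign_ne (hs g hgM)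
      obtain ⟨z', hz1, hz2, hz3⟩ := move hgp (𝓗.reg (N.erase f) s)
        (reg_open _ _ (fun i hi => hs i (hN.1 (Finset.mem_of_mem_erase hi)))) (insert f A) g
        (by
          rw [Finset.mem_insert]
          rintro (h | h)
          · exact hgf h
          · exact Finset.disjoint_left.1 hMA h hgM) z hzN hzfA h0 (- s g) h1
      exact ⟨z', hz1, hz2, by rw [hz3]; exact h2, by rw [hz3]; exact h1⟩
    · exact ⟨z, hzN, hzfA, hcon, by simpa [sign_eq_zero_iff] using h0⟩
  obtain ⟨a', b', ha', hb', hab', hu⟩ := crossing (𝓗 := 𝓗) g z' y hz'0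
    (by rw [hyM g hgM]; exact hz's)
  have : a' • z' + b' • y ∈ 𝓗.reg M s := by
    apply hN.2
    · intro i hi
      rw [ev_comb _ _ _ _ _ _ hab', hyA i hi, hz'A i (Finset.mem_insert_of_mem hi)]; simp
    · intro i hi
      rw [ev_comb _ _ _ _ _ _ hab']
      by_cases hif : i = f
      · subst hif
        rw [hz'A i (Finset.mem_insert_self _ _), mul_zero, zero_add, sgn_pos_mul hb']
        exact hyM i hfM
      · exact sgn_comb ha' hb'.le hab' (hz'N i (Finset.mem_erase.2 ⟨hif, hi⟩)) (hyM i (hN.1 hi))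
  have := this g hgM
  rw [hu, sign_zero] at this
  exact hs g hgM this.symm

/-- number of walls -/
lemma walls_card (hgp : 𝓗.GeneralPosition) (M A : Finset (Fin n)) (hMA : Disjoint A M)
    (s : Fin n → SignType) (hs : ∀ i ∈ M, s i ≠ 0) (y : Fin d → ℝ) (hyA : ∀ i ∈ A, 𝓗.ev i y = 0)
    (hyM : y ∈ 𝓗.reg M s) :
    ∃ N ⊆ M, min M.card (d - A.card) ≤ N.card ∧
      ∀ f ∈ N, ∃ z ∈ 𝓗.reg (M.erase f) s, (∀ i ∈ A, 𝓗.ev i z = 0) ∧ 𝓗.ev f z = 0 := by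
  obtain ⟨N, hN, h1, h2⟩ := walls hgp M A hMA s hs y hyA hyM
  refine ⟨N, hN, ?_, h2⟩
  by_contra hcon
  push Not at hcon
  rw [lt_min_iff] at hcon
  obtain ⟨g, hgM, hgN⟩ := Finset.exists_mem_notMem_of_card_lt_card hcon.1
  have hc : (insert g (A ∪ N)).card ≤ d := by
    have := Finset.card_insert_le g (A ∪ N)
    have := Finset.card_union_le A N
    omega
  obtain ⟨x, hx⟩ := solve hgp _ hc (fun i => if i ∈ N then (s i : ℝ) else 0)
  have hxM : x ∈ 𝓗.reg M s := by
    apply h1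
    · intro i hi
      rw [hx i (by simp [hi]), if_neg]
      intro h
      exact Finset.disjoint_left.1 hMA hi (hN h)
    · intro i hi
      rw [hx i (by simp [hi]), if_pos hi]
      have := hs i (hN hi)
      revert this
      cases s i <;> simp
  have h3 := hxM g hgM
  rw [hx g (by simp), if_neg hgN, sign_zero] at h3
  exact hs g hgM h3.symm

/-- all small sets avoiding `M` are in the support -/
lemma supp_all (hgp : 𝓗.GeneralPosition) (M A : Finset (Fin n)) (hMA : Disjoint A M)
    (s : Fin n → SignType) (hc : A.card + M.card ≤ d) :
    ∃ x ∈ 𝓗.reg M s, ∀ i ∈ A, 𝓗.ev i x = 0 := by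
  obtain ⟨x, hx⟩ := solve hgp (A ∪ M) ((Finset.card_union_le _ _).trans hc)
    (fun i => if i ∈ M then (s i : ℝ) else 0)
  refine ⟨x, ?_, ?_⟩
  · intro i hi
    rw [hx i (by simp [hi]), if_pos hi]
    cases s i <;> simp
  · intro i hi
    rw [hx i (by simp [hi]), if_neg (Finset.disjoint_left.1 hMA hi)]

open Classical in
/-- sign patterns on `B` of points of `U ∩ L_A` -/
def regs (𝓗 : Arrangement d n) (A B : Finset (Fin n)) (U : Set (Fin d → ℝ)) :
    Finset (Fin n → SignType) :=
  Finset.univ.filter (fun s => ∃ x ∈ U, (∀ i ∈ A, 𝓗.ev i x = 0) ∧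
    ∀ i, (i ∈ B → 𝓗.ev i x ≠ 0 ∧ s i = SignType.sign (𝓗.ev i x)) ∧ (i ∉ B → s i = 0))

open Classical in
/-- flats inside `B` meeting `U ∩ L_A` -/
def flats (𝓗 : Arrangement d n) (A B : Finset (Fin n)) (U : Set (Fin d → ℝ)) :
    Finset (Finset (Fin n)) :=
  B.powerset.filter (fun C => ∃ x ∈ U, (∀ i ∈ A, 𝓗.ev i x = 0) ∧ ∀ i ∈ C, 𝓗.ev i x = 0)

lemma mem_regs {A B : Finset (Fin n)} {U : Set (Fin d → ℝ)} {s : Fin n → SignType} :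
    s ∈ 𝓗.regs A B U ↔ ∃ x ∈ U, (∀ i ∈ A, 𝓗.ev i x = 0) ∧
    ∀ i, (i ∈ B → 𝓗.ev i x ≠ 0 ∧ s i = SignType.sign (𝓗.ev i x)) ∧ (i ∉ B → s i = 0) := by
  simp [regs]

lemma mem_flats {A B : Finset (Fin n)} {U : Set (Fin d → ℝ)} {C : Finset (Fin n)} :
    C ∈ 𝓗.flats A B U ↔ C ⊆ B ∧ ∃ x ∈ U, (∀ i ∈ A, 𝓗.ev i x = 0) ∧ ∀ i ∈ C, 𝓗.ev i x = 0 := by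
  simp [flats]

lemma flats_insert {A B : Finset (Fin n)} {U : Set (Fin d → ℝ)} {b : Fin n} (hb : b ∉ B) :
    (𝓗.flats A (insert b B) U).card = (𝓗.flats A B U).card + (𝓗.flats (insert b A) B U).card := by
  classical
  have hinj : Set.InjOn (insert b) ((𝓗.flats (insert b A) B U : Finset _) : Set (Finset (Fin n))) := by
    intro s hs t ht h
    have hs' : b ∉ s := fun h => hb ((mem_flats.1 hs).1 h)
    have ht' : b ∉ t := fun h => hb ((mem_flats.1 ht).1 h)
    have := congrArg (fun u => u.erase b) h
    simpa [Finset.erase_insert hs', Finset.erase_insert ht'] using this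
  rw [← Finset.card_image_of_injOn hinj, ← Finset.card_union_of_disjoint]
  · congr 1
    ext C
    rw [Finset.mem_union, Finset.mem_image]
    constructor
    · intro h
      rw [mem_flats] at h
      obtain ⟨hC, x, hx, hxA, hxC⟩ := h
      by_cases hbC : b ∈ C
      · right
        refine ⟨C.erase b, mem_flats.2 ⟨?_, x, hx, ?_, ?_⟩, Finset.insert_erase hbC⟩
        · intro i hi
          exact Finset.mem_of_mem_insert_of_ne (hC (Finset.mem_of_mem_erase hi)) (Finset.ne_of_mem_erase hi)
        · intro i hi
          rw [Finset.mem_insert] at hi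
          rcases hi with rfl | hi
          · exact hxC _ hbC
          · exact hxA i hi
        · intro i hi
          exact hxC i (Finset.mem_of_mem_erase hi)
      · left
        refine mem_flats.2 ⟨?_, x, hx, hxA, hxC⟩
        intro i hi
        exact Finset.mem_of_mem_insert_of_ne (hC hi) (by rintro rfl; exact hbC hi)
    · rintro (h | ⟨D, hD, rfl⟩)
      · rw [mem_flats] at h ⊢
        exact ⟨h.1.trans (Finset.subset_insert _ _), h.2⟩
      · rw [mem_flats] at hD ⊢
        obtain ⟨hD, x, hx, hxA, hxC⟩ := hD
        refine ⟨Finset.insert_subset_insert _ hD, x, hx, fun i hi => hxA i (Finset.mem_insert_of_mem hi), ?_⟩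
        intro i hi
        rw [Finset.mem_insert] at hi
        rcases hi with rfl | hi
        · exact hxA _ (Finset.mem_insert_self _ _)
        · exact hxC i hi
  · rw [Finset.disjoint_left]
    intro C hC hC'
    rw [Finset.mem_image] at hC'
    obtain ⟨D, _, rfl⟩ := hC'
    exact hb ((mem_flats.1 hC).1 (Finset.mem_insert_self _ _))

lemma regs_insert (hgp : 𝓗.GeneralPosition) {A B : Finset (Fin n)} {U : Set (Fin d → ℝ)}
    (hU : IsOpen U) (hUc : Convex ℝ U) {b : Fin n} (hb : b ∉ B) (hbA : b ∉ A) :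
    (𝓗.regs A (insert b B) U).card = (𝓗.regs A B U).card + (𝓗.regs (insert b A) B U).card := by
  classical
  set P : SignType → Finset (Fin n → SignType) := fun e => Finset.univ.filter (fun s =>
    ∃ x ∈ U, (∀ i ∈ A, 𝓗.ev i x = 0) ∧ SignType.sign (𝓗.ev b x) = e ∧
    ∀ i, (i ∈ B → 𝓗.ev i x ≠ 0 ∧ s i = SignType.sign (𝓗.ev i x)) ∧ (i ∉ B → s i = 0)) with hP
  have memP : ∀ e s, s ∈ P e ↔ ∃ x ∈ U, (∀ i ∈ A, 𝓗.ev i x = 0) ∧ SignType.sign (𝓗.ev b x) = e ∧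
    ∀ i, (i ∈ B → 𝓗.ev i x ≠ 0 ∧ s i = SignType.sign (𝓗.ev i x)) ∧ (i ∉ B → s i = 0) := by
    intro e s; simp [hP]
  have hPb : ∀ e s, s ∈ P e → s b = 0 := by
    intro e s hs
    obtain ⟨x, _, _, _, h⟩ := (memP e s).1 hs
    exact (h b).2 hb
  have hinj : ∀ e, Set.InjOn (fun s : Fin n → SignType => Function.update s b e) (P e : Finset _) := by
    intro e s hs t ht h
    have := congrArg (fun u => Function.update u b (0 : SignType)) h
    simp only [Function.update_idem] at this
    rwa [← hPb e s hs, Function.update_eq_self, hPb e s hs, ← hPb e t ht, Function.update_eq_self] at this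
  have e1 : 𝓗.regs A (insert b B) U = (P 1).image (fun s => Function.update s b 1) ∪
      (P (-1)).image (fun s => Function.update s b (-1)) := by
    ext s
    rw [Finset.mem_union, Finset.mem_image, Finset.mem_image]
    constructor
    · intro hs
      obtain ⟨x, hx, hxA, h⟩ := mem_regs.1 hs
      obtain ⟨h0, hsb⟩ := (h b).1 (Finset.mem_insert_self _ _)
      have hmem : Function.update s b 0 ∈ P (SignType.sign (𝓗.ev b x)) := by
        rw [memP]
        refine ⟨x, hx, hxA, rfl, fun i => ?_⟩
        by_cases hib : i = b
        · subst hib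
          simp [hb]
        · rw [Function.update_of_ne hib]
          have := h i
          simpa [Finset.mem_insert, hib] using this
      rcases lt_or_gt_of_ne h0 with hlt | hlt
      · right
        rw [sign_neg hlt] at hmem hsb
        exact ⟨_, hmem, by simp [← hsb]⟩
      · left
        rw [sign_pos hlt] at hmem hsb
        exact ⟨_, hmem, by simp [← hsb]⟩
    · have : ∀ e t, e ≠ 0 → t ∈ P e → Function.update t b e ∈ 𝓗.regs A (insert b B) U := by
        intro e t he ht
        obtain ⟨x, hx, hxA, hxe, h⟩ := (memP e t).1 ht
        rw [mem_regs]
        refine ⟨x, hx, hxA, fun i => ?_⟩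
        by_cases hib : i = b
        · subst hib
          simp only [Finset.mem_insert_self, Function.update_self, hxe, forall_const, and_true,
            not_true, false_imp_iff]
          intro h0
          rw [h0, sign_zero] at hxe
          exact he hxe.symm
        · rw [Function.update_of_ne hib]
          have := h i
          simpa [Finset.mem_insert, hib] using this
      rintro (⟨t, ht, rfl⟩ | ⟨t, ht, rfl⟩)
      · exact this 1 t (by decide) ht
      · exact this (-1) t (by decide) ht
  have e2 : (P 1) ∪ (P (-1)) = 𝓗.regs A B U := by
    ext s
    rw [Finset.mem_union, memP, memP, mem_regs]
    constructor
    · rintro (⟨x, hx, hxA, _, h⟩ | ⟨x, hx, hxA, _, h⟩) <;> exact ⟨x, hx, hxA, h⟩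
    · rintro ⟨x, hx, hxA, h⟩
      by_cases h0 : 𝓗.ev b x = 0
      · left
        have hsB : ∀ i ∈ B, s i ≠ 0 := by
          intro i hi
          rw [((h i).1 hi).2]
          simpa [sign_eq_zero_iff] using ((h i).1 hi).1
        obtain ⟨z, hz, hzA, hzb⟩ := move hgp (U ∩ 𝓗.reg B s) (hU.inter (reg_open _ _ hsB)) A b hbA x
          ⟨hx, fun i hi => (((h i).1 hi).2).symm⟩ hxA h0 1 (by decide)
        refine ⟨z, hz.1, hzA, hzb, fun i => ⟨fun hi => ⟨?_, (hz.2 i hi).symm⟩, (h i).2⟩⟩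
        intro h3
        have := hz.2 i hi
        rw [h3, sign_zero] at this
        exact hsB i hi this.symm
      · rcases lt_or_gt_of_ne h0 with hlt | hlt
        · right; exact ⟨x, hx, hxA, sign_neg hlt, h⟩
        · left; exact ⟨x, hx, hxA, sign_pos hlt, h⟩
  have e3 : (P 1) ∩ (P (-1)) = 𝓗.regs (insert b A) B U := by
    ext s
    rw [Finset.mem_inter, memP, memP, mem_regs]
    constructor
    · rintro ⟨⟨x, hx, hxA, hxb, h⟩, ⟨y, hy, hyA, hyb, h'⟩⟩
      obtain ⟨a, c, ha, hc, hac, hz⟩ := crossing (𝓗 := 𝓗) b x y (by rw [hxb]; decide)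
        (by rw [hxb, hyb]; decide)
      refine ⟨a • x + c • y, hUc hx hy ha hc.le hac, ?_, fun i => ⟨fun hi => ?_, (h i).2⟩⟩
      · intro i hi
        rw [Finset.mem_insert] at hi
        rcases hi with rfl | hi
        · exact hz
        · rw [ev_comb _ _ _ _ _ _ hac, hxA i hi, hyA i hi]; simp
      · have h1 := (h i).1 hi
        have h2 := (h' i).1 hi
        have h3 : SignType.sign (𝓗.ev i (a • x + c • y)) = s i := by
          rw [ev_comb _ _ _ _ _ _ hac]
          exact sgn_comb ha hc.le hac h1.2.symm h2.2.symm
        refine ⟨?_, h3.symm⟩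
        intro h4
        rw [h4, sign_zero, h1.2] at h3
        exact h1.1 (sign_eq_zero_iff.1 h3.symm)
    · rintro ⟨x, hx, hxA, h⟩
      have hsB : ∀ i ∈ B, s i ≠ 0 := by
        intro i hi
        rw [((h i).1 hi).2]
        simpa [sign_eq_zero_iff] using ((h i).1 hi).1
      have key : ∀ e : SignType, e ≠ 0 → ∃ x ∈ U, (∀ i ∈ A, 𝓗.ev i x = 0) ∧
          SignType.sign (𝓗.ev b x) = e ∧
          ∀ i, (i ∈ B → 𝓗.ev i x ≠ 0 ∧ s i = SignType.sign (𝓗.ev i x)) ∧ (i ∉ B → s i = 0) := by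
        intro e he
        obtain ⟨z, hz, hzA, hzb⟩ := move hgp (U ∩ 𝓗.reg B s) (hU.inter (reg_open _ _ hsB)) A b hbA x
          ⟨hx, fun i hi => (((h i).1 hi).2).symm⟩ (fun i hi => hxA i (Finset.mem_insert_of_mem hi))
          (hxA b (Finset.mem_insert_self _ _)) e he
        refine ⟨z, hz.1, hzA, hzb, fun i => ⟨fun hi => ⟨?_, (hz.2 i hi).symm⟩, (h i).2⟩⟩
        intro h3
        have := hz.2 i hi
        rw [h3, sign_zero] at this
        exact hsB i hi this.symm
      exact ⟨key 1 (by decide), key (-1) (by decide)⟩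
  rw [e1, Finset.card_union_of_disjoint, Finset.card_image_of_injOn (hinj _),
    Finset.card_image_of_injOn (hinj _), ← e2, ← e3, Finset.card_union_add_card_inter]
  rw [Finset.disjoint_left]
  intro s h1 h2
  rw [Finset.mem_image] at h1 h2
  obtain ⟨t, _, rfl⟩ := h1
  obtain ⟨u, _, hu⟩ := h2
  have := congrFun hu b
  simp at this

lemma regs_card (hgp : 𝓗.GeneralPosition) {U : Set (Fin d → ℝ)}
    (hU : IsOpen U) (hUc : Convex ℝ U) (B : Finset (Fin n)) : ∀ A : Finset (Fin n), Disjoint A B →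
    (𝓗.regs A B U).card = (𝓗.flats A B U).card := by
  classical
  induction B using Finset.induction_on with
  | empty =>
    intro A _
    by_cases h : ∃ x ∈ U, ∀ i ∈ A, 𝓗.ev i x = 0
    · have h1 : 𝓗.regs A ∅ U = {fun _ => 0} := by
        ext s
        rw [mem_regs, Finset.mem_singleton]
        constructor
        · rintro ⟨x, _, _, h⟩
          funext i
          exact (h i).2 (by simp)
        · rintro rfl
          obtain ⟨x, hx, hA⟩ := h
          exact ⟨x, hx, hA, by simp⟩
      have h2 : 𝓗.flats A ∅ U = {∅} := by
        ext C
        rw [mem_flats, Finset.mem_singleton, Finset.subset_empty]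
        constructor
        · exact fun h => h.1
        · rintro rfl
          obtain ⟨x, hx, hA⟩ := h
          exact ⟨rfl, x, hx, hA, by simp⟩
      rw [h1, h2]; simp
    · have h1 : 𝓗.regs A ∅ U = ∅ := by
        ext s
        rw [mem_regs]
        simp only [Finset.notMem_empty, iff_false]
        rintro ⟨x, hx, hA, _⟩
        exact h ⟨x, hx, hA⟩
      have h2 : 𝓗.flats A ∅ U = ∅ := by
        ext s
        rw [mem_flats]
        simp only [Finset.notMem_empty, iff_false]
        rintro ⟨_, x, hx, hA, _⟩
        exact h ⟨x, hx, hA⟩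
      rw [h1, h2]; simp
  | insert b B hb ih =>
    intro A hAB
    rw [Finset.disjoint_insert_right] at hAB
    rw [regs_insert hgp hU hUc hb hAB.1, flats_insert hb, ih A hAB.2, ih (insert b A)]
    rw [Finset.disjoint_insert_left]
    exact ⟨hb, hAB.2⟩

end geo
end Arrangement

namespace Arrangement
section cham
variable {d n : ℕ} {𝓗 : Arrangement d n}

/-- sign vector of a point -/
def sg (𝓗 : Arrangement d n) (x : Fin d → ℝ) : Fin n → SignType := fun i => SignType.sign (𝓗.ev i x)

/-- cell of a sign vector -/
def cell (𝓗 : Arrangement d n) (t : Fin n → SignType) : Set (Fin d → ℝ) := 𝓗.reg Finset.univ t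

lemma mem_cell {t : Fin n → SignType} {x : Fin d → ℝ} : x ∈ 𝓗.cell t ↔ 𝓗.sg x = t := by
  simp [cell, reg, sg, funext_iff]

lemma mem_free {x : Fin d → ℝ} : x ∈ 𝓗.free ↔ ∀ i, 𝓗.ev i x ≠ 0 := by
  simp [free, H, ev, sub_eq_zero]

lemma mem_free' {x : Fin d → ℝ} : x ∈ 𝓗.free ↔ ∀ i, 𝓗.sg x i ≠ 0 := by
  rw [mem_free]; simp [sg, sign_eq_zero_iff]

lemma self_cell (x : Fin d → ℝ) : x ∈ 𝓗.cell (𝓗.sg x) := mem_cell.2 rfl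

lemma cell_inj {x : Fin d → ℝ} {t : Fin n → SignType} (h : 𝓗.cell (𝓗.sg x) = 𝓗.cell t) : 𝓗.sg x = t := by
  rw [← mem_cell, ← h]; exact self_cell x

lemma chamber_eq {x : Fin d → ℝ} (hx : x ∈ 𝓗.free) :
    connectedComponentIn 𝓗.free x = 𝓗.cell (𝓗.sg x) := by
  apply Set.Subset.antisymm
  · intro y hy
    rw [mem_cell]
    by_contra hcon
    obtain ⟨i, hi⟩ := Function.ne_iff.1 hcon
    have hpc := (isPreconnected_connectedComponentIn (F := 𝓗.free) (x := x)).image (𝓗.ev i)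
      (𝓗.ev_cont i).continuousOn
    have hyf := connectedComponentIn_subset _ _ hy
    have hxm := mem_connectedComponentIn hx
    have hoc := hpc.ordConnected
    have h1 := mem_free.1 hx i
    have h2 := mem_free.1 hyf i
    have h0 : (0:ℝ) ∈ (𝓗.ev i) '' connectedComponentIn 𝓗.free x := by
      rcases lt_or_gt_of_ne h1 with h1 | h1 <;> rcases lt_or_gt_of_ne h2 with h2 | h2
      · exact absurd (by simp [sg, sign_neg h1, sign_neg h2]) hi
      · exact hoc.out ⟨x, hxm, rfl⟩ ⟨y, hy, rfl⟩ ⟨h1.le, h2.le⟩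
      · exact hoc.out ⟨y, hy, rfl⟩ ⟨x, hxm, rfl⟩ ⟨h2.le, h1.le⟩
      · exact absurd (by simp [sg, sign_pos h1, sign_pos h2]) hi
    obtain ⟨z, hz, hz0⟩ := h0
    exact mem_free.1 (connectedComponentIn_subset _ _ hz) i hz0
  · apply IsPreconnected.subset_connectedComponentIn (reg_convex _ _).isPreconnected (self_cell x)
    intro y hy
    rw [mem_free', mem_cell.1 hy]
    exact mem_free'.1 hx

lemma mem_chambers {C : Set (Fin d → ℝ)} :
    C ∈ 𝓗.chambers ↔ ∃ x ∈ 𝓗.free, C = 𝓗.cell (𝓗.sg x) := by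
  unfold chambers
  constructor
  · rintro ⟨x, hx, rfl⟩; exact ⟨x, hx, chamber_eq hx⟩
  · rintro ⟨x, hx, rfl⟩; exact ⟨x, hx, (chamber_eq hx).symm⟩

lemma chambers_finite : 𝓗.chambers.Finite := by
  apply (Set.finite_range 𝓗.cell).subset
  intro C hC
  obtain ⟨x, _, rfl⟩ := mem_chambers.1 hC
  exact ⟨_, rfl⟩

lemma cell_open {x : Fin d → ℝ} (hx : x ∈ 𝓗.free) : IsOpen (𝓗.cell (𝓗.sg x)) :=
  reg_open _ _ (fun i _ => mem_free'.1 hx i)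

lemma convex_desc (hgp : 𝓗.GeneralPosition) (S : Set (Set (Fin d → ℝ))) (hS : S ⊆ 𝓗.chambers)
    (hconv : Convex ℝ (thickening S)) (hne : S.Nonempty) :
    ∃ (M : Finset (Fin n)) (s : Fin n → SignType), (∀ i, s i ≠ 0) ∧
      ∀ x ∈ 𝓗.free, (𝓗.cell (𝓗.sg x) ∈ S ↔ x ∈ 𝓗.reg M s) := by
  classical
  set T := thickening S with hT
  have hTo : IsOpen T := isOpen_interior
  have hin : ∀ x ∈ 𝓗.free, 𝓗.cell (𝓗.sg x) ∈ S → 𝓗.cell (𝓗.sg x) ⊆ T := by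
    intro x hx hxS
    apply interior_maximal _ (cell_open hx)
    exact (Set.subset_biUnion_of_mem (u := fun C => C) hxS).trans subset_closure
  have hout : ∀ x ∈ 𝓗.free, x ∈ T → 𝓗.cell (𝓗.sg x) ∈ S := by
    intro x hx hxT
    have hcl : x ∈ closure (⋃ C ∈ S, C) := interior_subset hxT
    obtain ⟨p, hp, hpS⟩ := mem_closure_iff.1 hcl _ (cell_open hx) (self_cell x)
    simp only [Set.mem_iUnion] at hpS
    obtain ⟨C, hC, hpC⟩ := hpS
    obtain ⟨c, hc, rfl⟩ := mem_chambers.1 (hS hC)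
    rw [← mem_cell.1 hp, mem_cell.1 hpC]
    exact hC
  obtain ⟨C0, hC0⟩ := hne
  obtain ⟨y0, hy0, rfl⟩ := mem_chambers.1 (hS hC0)
  have hy0T : y0 ∈ T := hin y0 hy0 hC0 (self_cell y0)
  set M : Finset (Fin n) := Finset.univ.filter (fun i => ∀ x ∈ T, 𝓗.ev i x ≠ 0) with hM
  have hMmem : ∀ i, i ∈ M ↔ ∀ x ∈ T, 𝓗.ev i x ≠ 0 := by intro i; simp [hM]
  have hTM : ∀ x ∈ T, x ∈ 𝓗.reg M (𝓗.sg y0) := by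
    intro x hx i hi
    by_contra hcon
    obtain ⟨a, b, ha, hb, hab, hz⟩ := crossing (𝓗 := 𝓗) i y0 x (mem_free'.1 hy0 i) (Ne.symm hcon)
    exact (hMmem i).1 hi _ (hconv hy0T hx ha hb.le hab) hz
  refine ⟨M, 𝓗.sg y0, mem_free'.1 hy0, fun x hx => ⟨fun h => hTM x (hin x hx h (self_cell x)), ?_⟩⟩
  intro hxM
  have main : ∀ m : ℕ, ∀ y ∈ 𝓗.free, 𝓗.cell (𝓗.sg y) ∈ S →
      (Finset.univ.filter (fun i => 𝓗.sg x i ≠ 𝓗.sg y i)).card = m → 𝓗.cell (𝓗.sg x) ∈ S := by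
    intro m
    induction m using Nat.strong_induction_on with
    | _ m ih =>
    intro y hy hyS hm
    have hyT := hin y hy hyS (self_cell y)
    by_cases hxy : 𝓗.sg x = 𝓗.sg y
    · rw [hxy]; exact hyS
    obtain ⟨N, _, hN1, hN2⟩ := walls hgp Finset.univ ∅ (by simp) (𝓗.sg y)
      (fun i _ => mem_free'.1 hy i) y (by simp) (self_cell y)
    obtain ⟨f, hfN, hf⟩ : ∃ f ∈ N, 𝓗.sg x f ≠ 𝓗.sg y f := by
      by_contra hcon
      push Not at hcon
      exact hxy (mem_cell.1 (hN1 x (by simp) hcon))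
    have hfM : f ∉ M := by
      intro h
      apply hf
      exact (hxM f h).trans (hTM y hyT f h).symm
    obtain ⟨z, hz, -, hzf⟩ := hN2 f hfN
    have hro : IsOpen (𝓗.reg (Finset.univ.erase f) (𝓗.sg y)) :=
      reg_open _ _ (fun i _ => mem_free'.1 hy i)
    obtain ⟨hn0, hnn⟩ := neg_sign_ne (mem_free'.1 hy f)
    obtain ⟨y', hy'r, -, hy'f⟩ := move hgp _ hro ∅ f (by simp) z hz (by simp) hzf _ hn0
    have hsg : ∀ i, i ≠ f → 𝓗.sg y' i = 𝓗.sg y i := fun i hi => hy'r i (by simp [hi])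
    have hy'free : y' ∈ 𝓗.free := by
      rw [mem_free']
      intro i
      by_cases hi : i = f
      · subst hi; exact fun h => hn0 (hy'f.symm.trans h)
      · rw [hsg i hi]; exact mem_free'.1 hy i
    have hy'S : 𝓗.cell (𝓗.sg y') ∈ S := by
      rw [hMmem] at hfM
      push Not at hfM
      obtain ⟨w, hwT, hwf⟩ := hfM
      obtain ⟨w', hw'T, -, hw'f⟩ := move hgp T hTo ∅ f (by simp) w hwT (by simp) hwf _ hn0
      -- z is in the closure of T
      have hzcl : z ∈ closure T := by
        have hseg : openSegment ℝ z y ⊆ T := by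
          rintro u ⟨a, b, ha, hb, hab, rfl⟩
          apply hin y hy hyS
          rw [mem_cell]
          funext i
          simp only [sg]
          rw [ev_comb _ _ _ _ _ _ hab]
          by_cases hi : i = f
          · subst hi
            rw [hzf, mul_zero, zero_add, sgn_pos_mul hb]
          · exact sgn_comb ha.le hb.le hab (hz i (by simp [hi])) rfl
        apply closure_mono hseg
        rw [closure_openSegment]
        exact left_mem_segment ℝ z y
      have hcont : Continuous (fun t : ℝ => (1 - t) • z + t • w') := by fun_prop
      have hopen : IsOpen ((fun t : ℝ => (1 - t) • z + t • w') ⁻¹' (𝓗.reg (Finset.univ.erase f) (𝓗.sg y))) :=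
        hro.preimage hcont
      have h0 : (0:ℝ) ∈ ((fun t : ℝ => (1 - t) • z + t • w') ⁻¹' (𝓗.reg (Finset.univ.erase f) (𝓗.sg y))) := by
        simpa using hz
      obtain ⟨ε, hε, hball⟩ := Metric.isOpen_iff.1 hopen 0 h0
      set t := min (ε / 2) (1/2) with ht
      have ht0 : 0 < t := by positivity
      have ht1 : t < 1 := by have := min_le_right (ε/2) (1/2:ℝ); linarith
      have htε : t < ε := by have := min_le_left (ε/2) (1/2:ℝ); linarith
      have hmem : t ∈ Metric.ball (0:ℝ) ε := by
        rw [Metric.mem_ball, Real.dist_eq, sub_zero, abs_of_pos ht0]; exact htε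
      have hq := hball hmem
      have hqT : (1 - t) • z + t • w' ∈ T := by
        have := hconv.openSegment_closure_interior_subset_interior hzcl (hTo.interior_eq.symm ▸ hw'T)
        rw [hTo.interior_eq] at this
        exact this ⟨1 - t, t, by linarith, ht0, by ring, rfl⟩
      have hqsg : 𝓗.sg ((1 - t) • z + t • w') = 𝓗.sg y' := by
        funext i
        by_cases hi : i = f
        · subst hi
          simp only [sg]
          rw [ev_comb _ _ _ _ _ _ (by ring), hzf, mul_zero, zero_add, sgn_pos_mul ht0, hw'f, hy'f]
        · rw [hsg i hi]
          exact hq i (by simp [hi])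
      rw [← hqsg]
      apply hout _ _ hqT
      rw [mem_free', hqsg]
      exact mem_free'.1 hy'free
    refine ih _ ?_ y' hy'free hy'S rfl
    rw [← hm]
    apply Finset.card_lt_card
    rw [Finset.ssubset_iff_of_subset]
    · refine ⟨f, by simpa using hf, ?_⟩
      simp only [Finset.mem_filter, Finset.mem_univ, true_and, not_not]
      have e : 𝓗.sg y' f = - 𝓗.sg y f := hy'f
      rw [e]
      have h1 := mem_free'.1 hx f
      have h2 := mem_free'.1 hy f
      revert hf h1 h2
      cases 𝓗.sg x f <;> cases 𝓗.sg y f <;> simp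
    · intro i hi
      simp only [Finset.mem_filter, Finset.mem_univ, true_and] at hi ⊢
      by_cases hif : i = f
      · subst hif; exact hf
      · rwa [hsg i hif] at hi
  exact main _ y0 hy0 hC0 rfl

lemma ncard_eq (hgp : 𝓗.GeneralPosition) (S : Set (Set (Fin d → ℝ))) (hS : S ⊆ 𝓗.chambers)
    (M : Finset (Fin n)) (s : Fin n → SignType) (hs : ∀ i, s i ≠ 0)
    (h : ∀ x ∈ 𝓗.free, (𝓗.cell (𝓗.sg x) ∈ S ↔ x ∈ 𝓗.reg M s)) :
    S.ncard = (𝓗.flats ∅ Finset.univ (𝓗.reg M s)).card := by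
  rw [← regs_card hgp (reg_open _ _ (fun i _ => hs i)) (reg_convex _ _) Finset.univ ∅ (by simp)]
  have key : ∀ t, t ∈ 𝓗.regs ∅ Finset.univ (𝓗.reg M s) ↔ ∃ x ∈ 𝓗.reg M s, x ∈ 𝓗.free ∧ 𝓗.sg x = t := by
    intro t
    rw [mem_regs]
    constructor
    · rintro ⟨x, hx, -, h⟩
      exact ⟨x, hx, mem_free.2 (fun i => ((h i).1 (by simp)).1), funext (fun i => ((h i).1 (by simp)).2.symm)⟩
    · rintro ⟨x, hx, hf, rfl⟩
      exact ⟨x, hx, by simp, fun i => ⟨fun _ => ⟨mem_free.1 hf i, rfl⟩, by simp⟩⟩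
  have e : S = 𝓗.cell '' (𝓗.regs ∅ Finset.univ (𝓗.reg M s) : Set (Fin n → SignType)) := by
    ext C
    constructor
    · intro hC
      obtain ⟨x, hx, rfl⟩ := mem_chambers.1 (hS hC)
      exact ⟨_, Finset.mem_coe.2 ((key _).2 ⟨x, (h x hx).1 hC, hx, rfl⟩), rfl⟩
    · rintro ⟨t, ht, rfl⟩
      obtain ⟨x, hx, hf, rfl⟩ := (key _).1 (Finset.mem_coe.1 ht)
      exact (h x hf).2 hx
  rw [e, Set.ncard_image_of_injOn, Set.ncard_coe_finset]
  intro t ht u hu htu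
  obtain ⟨x, hx, hf, rfl⟩ := (key _).1 (Finset.mem_coe.1 ht)
  exact cell_inj htu

lemma cell_pos {t : Fin n → SignType} {x : Fin d → ℝ} (hx : 𝓗.sg x = t) (e : Fin n) :
    𝓗.cell t ⊆ 𝓗.pos e ↔ t e = 1 := by
  constructor
  · intro h
    have := h (mem_cell.2 hx)
    simp only [pos, Set.mem_ofPred_eq] at this
    rw [← hx]
    apply sign_pos
    unfold ev; linarith
  · intro h y hy
    have := congrFun (mem_cell.1 hy) e
    rw [h] at this
    have := sign_eq_one_iff.1 this
    unfold ev at this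
    simp only [pos, Set.mem_ofPred_eq]
    linarith

lemma cell_neg {t : Fin n → SignType} {x : Fin d → ℝ} (hx : 𝓗.sg x = t) (e : Fin n) :
    𝓗.cell t ⊆ 𝓗.neg e ↔ t e = -1 := by
  constructor
  · intro h
    have := h (mem_cell.2 hx)
    simp only [neg, Set.mem_ofPred_eq] at this
    rw [← hx]
    apply sign_neg
    unfold ev; linarith
  · intro h y hy
    have := congrFun (mem_cell.1 hy) e
    rw [h] at this
    have := sign_eq_neg_one_iff.1 this
    unfold ev at this
    simp only [neg, Set.mem_ofPred_eq]
    linarith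

lemma separates_iff {x y : Fin d → ℝ} (hx : x ∈ 𝓗.free) (hy : y ∈ 𝓗.free) (e : Fin n) :
    𝓗.Separates e (𝓗.cell (𝓗.sg x)) (𝓗.cell (𝓗.sg y)) ↔ 𝓗.sg x e ≠ 𝓗.sg y e := by
  unfold Separates
  rw [cell_pos rfl, cell_pos rfl, cell_neg rfl, cell_neg rfl]
  have h1 := mem_free'.1 hx e
  have h2 := mem_free'.1 hy e
  revert h1 h2
  generalize 𝓗.sg x e = a
  generalize 𝓗.sg y e = b
  revert a b
  decide

lemma edge_lower (hgp : 𝓗.GeneralPosition) (S : Set (Set (Fin d → ℝ))) (hS : S ⊆ 𝓗.chambers)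
    (M : Finset (Fin n)) (s : Fin n → SignType) (hs : ∀ i, s i ≠ 0)
    (h : ∀ x ∈ 𝓗.free, (𝓗.cell (𝓗.sg x) ∈ S ↔ x ∈ 𝓗.reg M s)) :
    ∑ f ∈ M, (𝓗.flats {f} (Finset.univ.erase f) (𝓗.reg (M.erase f) s)).card
      ≤ (𝓗.edgeBoundary S).ncard := by
  classical
  have hreg : ∀ f, (𝓗.flats {f} (Finset.univ.erase f) (𝓗.reg (M.erase f) s)).card =
      (𝓗.regs {f} (Finset.univ.erase f) (𝓗.reg (M.erase f) s)).card := fun f =>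
    (regs_card hgp (reg_open _ _ (fun i _ => hs i)) (reg_convex _ _) _ _ (by simp)).symm
  simp_rw [hreg]
  rw [← Finset.card_sigma]
  have hfin : (𝓗.edgeBoundary S).Finite := by
    apply (chambers_finite.prod (chambers_finite (𝓗 := 𝓗))).subset
    rintro q ⟨-, -, h1, h2, -⟩
    exact ⟨h1, h2⟩
  set P := M.sigma (fun f => 𝓗.regs {f} (Finset.univ.erase f) (𝓗.reg (M.erase f) s)) with hP
  set φ : (Σ _ : Fin n, Fin n → SignType) → Set (Fin d → ℝ) × Set (Fin d → ℝ) :=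
    fun p => (𝓗.cell (Function.update p.2 p.1 (s p.1)), 𝓗.cell (Function.update p.2 p.1 (- s p.1))) with hφ
  have key : ∀ p ∈ P, p.1 ∈ M ∧ p.2 p.1 = 0 ∧
      (∀ i ∈ M, i ≠ p.1 → p.2 i = s i) ∧
      (∃ x ∈ 𝓗.free, 𝓗.sg x = Function.update p.2 p.1 (s p.1)) ∧
      (∃ x ∈ 𝓗.free, 𝓗.sg x = Function.update p.2 p.1 (- s p.1)) := by
    rintro ⟨f, t⟩ hp
    rw [hP, Finset.mem_sigma] at hp
    obtain ⟨hfM, ht⟩ := hp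
    simp only at hfM ht ⊢
    obtain ⟨x, hx, hxf, hxt⟩ := mem_regs.1 ht
    have hxf' := hxf f (by simp)
    have htne : ∀ i, i ≠ f → t i ≠ 0 := by
      intro i hi
      have := (hxt i).1 (by simp [hi])
      rw [this.2]
      simpa [sign_eq_zero_iff] using this.1
    refine ⟨hfM, (hxt f).2 (by simp), ?_, ?_⟩
    · intro i hi hif
      rw [((hxt i).1 (by simp [hif])).2]
      exact hx i (by simp [hi, hif])
    · have mv : ∀ e : SignType, e ≠ 0 → ∃ x ∈ 𝓗.free, 𝓗.sg x = Function.update t f e := by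
        intro e he
        obtain ⟨z, hz, -, hzf⟩ := move hgp (𝓗.reg (Finset.univ.erase f) t)
          (reg_open _ _ (fun i hi => htne i (by simpa using hi))) ∅ f (by simp) x
          (fun i hi => (((hxt i).1 hi).2).symm) (by simp) hxf' e he
        have e1 : 𝓗.sg z = Function.update t f e := by
          funext i
          by_cases hi : i = f
          · subst hi; rw [Function.update_self]; exact hzf
          · rw [Function.update_of_ne hi]; exact hz i (by simp [hi])
        refine ⟨z, ?_, e1⟩
        rw [mem_free', e1]
        intro i
        by_cases hi : i = f
        · subst hi; simpa using he
        · rw [Function.update_of_ne hi]; exact htne i hi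
      exact ⟨mv _ (hs f), mv _ (neg_sign_ne (hs f)).1⟩
  have hmaps : ∀ p ∈ P, φ p ∈ 𝓗.edgeBoundary S := by
    rintro p hp
    obtain ⟨hfM, h0, hps, ⟨x, hx, hxe⟩, ⟨y, hy, hye⟩⟩ := key p hp
    simp only [hφ, ← hxe, ← hye]
    refine ⟨?_, ?_, mem_chambers.2 ⟨x, hx, rfl⟩, mem_chambers.2 ⟨y, hy, rfl⟩, p.1, ?_, ?_⟩
    · rw [h x hx]
      intro i hi
      have := congrFun hxe i
      by_cases hif : i = p.1
      · subst hif; simpa [sg] using this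
      · rw [Function.update_of_ne hif, hps i hi hif] at this
        exact this
    · rw [h y hy]
      intro hyM
      have h1 := hyM p.1 hfM
      have h2 := congrFun hye p.1
      rw [Function.update_self] at h2
      exact (neg_sign_ne (hs p.1)).2 (h2.symm.trans h1)
    · change 𝓗.Separates p.1 _ _
      rw [separates_iff hx hy, hxe, hye]
      simpa using (neg_sign_ne (hs p.1)).2.symm
    · intro e he
      change 𝓗.Separates e _ _ at he
      rw [separates_iff hx hy, hxe, hye] at he
      by_contra hne
      exact he (by rw [Function.update_of_ne hne, Function.update_of_ne hne])
  have hinj : Set.InjOn φ (P : Finset _) := by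
    intro p hp q hq hpq
    obtain ⟨-, h0, -, ⟨x, hx, hxe⟩, ⟨y, hy, hye⟩⟩ := key p hp
    obtain ⟨-, h0', -, -, -⟩ := key q hq
    simp only [hφ, Prod.mk.injEq] at hpq
    obtain ⟨e1, e2⟩ := hpq
    rw [← hxe] at e1
    rw [← hye] at e2
    have e1' := cell_inj e1
    have e2' := cell_inj e2
    rw [hxe] at e1'
    rw [hye] at e2'
    obtain ⟨f, t⟩ := p
    obtain ⟨g, u⟩ := q
    simp only at e1' e2' h0 h0'
    have hfg : f = g := by
      by_contra hne
      have a1 := congrFun e1' f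
      have a2 := congrFun e2' f
      rw [Function.update_self, Function.update_of_ne hne] at a1 a2
      exact (neg_sign_ne (hs f)).2 (a2.trans a1.symm)
    subst hfg
    have : t = u := by
      have := congrArg (fun v => Function.update v f (0 : SignType)) e1'
      simp only [Function.update_idem] at this
      rwa [← h0, Function.update_eq_self, h0, ← h0', Function.update_eq_self] at this
    rw [this]
  calc P.card = (P.image φ).card := (Finset.card_image_of_injOn hinj).symm
    _ = ((P.image φ : Finset _) : Set (Set (Fin d → ℝ) × Set (Fin d → ℝ))).ncard := (Set.ncard_coe_finset _).symm
    _ ≤ _ := by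
      apply Set.ncard_le_ncard _ hfin
      intro q hq
      obtain ⟨p, hp, rfl⟩ := Finset.mem_image.1 (Finset.mem_coe.1 hq)
      exact hmaps p hp

lemma sum_lower (hgp : 𝓗.GeneralPosition)
    (M : Finset (Fin n)) (s : Fin n → SignType) (hs : ∀ i, s i ≠ 0) :
    ∑ C ∈ 𝓗.flats ∅ Finset.univ (𝓗.reg M s), min M.card (d - C.card) ≤
    ∑ f ∈ M, (𝓗.flats {f} (Finset.univ.erase f) (𝓗.reg (M.erase f) s)).card := by
  classical
  set D := 𝓗.flats ∅ Finset.univ (𝓗.reg M s) with hD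
  calc ∑ C ∈ D, min M.card (d - C.card)
      ≤ ∑ C ∈ D, (M.filter (fun f => C ∈ 𝓗.flats {f} (Finset.univ.erase f) (𝓗.reg (M.erase f) s))).card := by
        apply Finset.sum_le_sum
        intro C hC
        obtain ⟨-, y, hy, -, hyC⟩ := mem_flats.1 hC
        have hdis : Disjoint C M := by
          rw [Finset.disjoint_left]
          intro i hi hiM
          have := hy i hiM
          rw [hyC i hi, sign_zero] at this
          exact hs i this.symm
        obtain ⟨N, hNM, hN, hw⟩ := walls_card hgp M C hdis s (fun i _ => hs i) y hyC hy
        refine hN.trans (Finset.card_le_card ?_)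
        intro f hf
        rw [Finset.mem_filter]
        refine ⟨hNM hf, mem_flats.2 ⟨?_, ?_⟩⟩
        · intro i hi
          rw [Finset.mem_erase]
          refine ⟨?_, Finset.mem_univ _⟩
          rintro rfl
          exact Finset.disjoint_left.1 hdis hi (hNM hf)
        · obtain ⟨z, hz, hzC, hzf⟩ := hw f hf
          exact ⟨z, hz, by simpa using hzf, hzC⟩
    _ = ∑ f ∈ M, (D.filter (fun C => C ∈ 𝓗.flats {f} (Finset.univ.erase f) (𝓗.reg (M.erase f) s))).card := by
        simp_rw [Finset.card_filter]
        rw [Finset.sum_comm]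
    _ ≤ _ := by
        apply Finset.sum_le_sum
        intro f _
        apply Finset.card_le_card
        intro C hC
        exact (Finset.mem_filter.1 hC).2

end cham
end Arrangement

lemma stmt8_aux {d n : ℕ} (𝓗 : Arrangement d n) (hgp : 𝓗.GeneralPosition)
    (S : Set (Set (Fin d → ℝ))) (hS : S ⊆ 𝓗.chambers)
    (hproper : S ≠ 𝓗.chambers)
    (hconv : Convex ℝ (thickening S))
    (k : ℝ) (hk : (d : ℝ) - 1 ≤ k)
    (hcard : (S.ncard : ℝ) = gsum d k)
    (hle : (S.ncard : ℝ) ≤ gsum d ((n : ℝ) - d)) :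
      (∑ i ∈ Finset.range d, ((d : ℝ) - i) * gchoose k i) ≤
        ((𝓗.edgeBoundary S).ncard : ℝ) := by
  have hne : S.Nonempty := by
    rw [Set.nonempty_iff_ne_empty]
    rintro rfl
    rw [Set.ncard_empty] at hcard
    have h1 : (1:ℝ) ≤ gsum d k := by
      unfold gsum
      rw [Finset.sum_range_succ', gchoose_zero]
      have : 0 ≤ ∑ i ∈ Finset.range d, gchoose k (i+1) := by
        apply Finset.sum_nonneg
        intro i hi
        apply gchoose_nonneg
        have : ((i+1 : ℕ):ℝ) ≤ d := by exact_mod_cast Finset.mem_range.1 hi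
        linarith
      linarith
    simp at hcard
    linarith
  obtain ⟨M, s, hs, hM⟩ := 𝓗.convex_desc hgp S hS hconv hne
  have hMne : M.Nonempty := by
    by_contra hcon
    rw [Finset.not_nonempty_iff_eq_empty] at hcon
    subst hcon
    apply hproper
    apply hS.antisymm
    intro C hC
    obtain ⟨x, hx, rfl⟩ := Arrangement.mem_chambers.1 hC
    rw [hM x hx]
    intro i hi
    simp at hi
  have hM1 : 1 ≤ M.card := Finset.card_pos.2 hMne
  obtain ⟨f0, hf0⟩ := hMne
  have hd1 : 1 ≤ d := by
    rcases Nat.eq_zero_or_pos d with rfl | h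
    · exact absurd (Subsingleton.elim _ _) (𝓗.normal_ne f0)
    · exact h
  have hn1 : 1 ≤ n := by have := f0.pos; omega
  have hcount := Arrangement.ncard_eq hgp S hS M s hs hM
  set D := 𝓗.flats ∅ Finset.univ (𝓗.reg M s) with hD
  have hDM : ∀ C ∈ D, Disjoint C M := by
    intro C hC
    obtain ⟨-, y, hy, -, hyC⟩ := Arrangement.mem_flats.1 hC
    rw [Finset.disjoint_left]
    intro i hi hiM
    have := hy i hiM
    rw [hyC i hi, sign_zero] at this
    exact hs i this.symm
  have hpow : (S.ncard : ℝ) ≤ 2 ^ (n-1) := by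
    have h1 : D.card ≤ 2 ^ (n-1) := by
      calc D.card ≤ (Mᶜ.powerset).card := by
            apply Finset.card_le_card
            intro C hC
            rw [Finset.mem_powerset]
            intro i hi
            rw [Finset.mem_compl]
            exact Finset.disjoint_left.1 (hDM C hC) hi
        _ = 2 ^ (n - M.card) := by rw [Finset.card_powerset, Finset.card_compl, Fintype.card_fin]
        _ ≤ 2 ^ (n-1) := Nat.pow_le_pow_right (by norm_num) (by omega)
    rw [hcount]
    exact_mod_cast h1
  have hkn := k_le hd1 k hk _ hcard hle hpow hn1
  have h1 := comb_main D
    (by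
      intro C hC t ht
      obtain ⟨-, y, hy, h0, hyC⟩ := Arrangement.mem_flats.1 hC
      exact Arrangement.mem_flats.2 ⟨Finset.subset_univ _, y, hy, h0, fun i hi => hyC i (ht hi)⟩)
    (by
      intro C hC
      obtain ⟨-, y, hy, h0, hyC⟩ := Arrangement.mem_flats.1 hC
      exact Arrangement.card_le hgp C y hyC)
    k hk (by rw [← hcard, hcount]) M hM1
    (by
      intro C hC hc
      obtain ⟨x, hx, hxC⟩ := Arrangement.supp_all hgp M C hC s hc
      exact Arrangement.mem_flats.2 ⟨Finset.subset_univ _, x, hx, by simp, hxC⟩)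
    hkn
  have h2 := (Arrangement.sum_lower hgp M s hs).trans (Arrangement.edge_lower hgp S hS M s hs hM)
  refine h1.trans ?_
  exact_mod_cast h2

lemma chambers_card_le {d n : ℕ} (𝓗 : Arrangement d n) (hgp : 𝓗.GeneralPosition) :
    ((𝓗.chambers.ncard : ℕ) : ℝ) ≤ gsum d (n:ℝ) := by
  have h := Arrangement.ncard_eq hgp 𝓗.chambers subset_rfl ∅ (fun _ => 1) (by intro i; decide)
    (by
      intro x hx
      constructor
      · intro _ i hi; simp at hi
      · intro _; exact Arrangement.mem_chambers.2 ⟨x, hx, rfl⟩)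
  have h2 : 𝓗.chambers.ncard ≤ ∑ i ∈ Finset.range (d+1), n.choose i := by
    rw [h]
    set D := 𝓗.flats ∅ Finset.univ (𝓗.reg ∅ (fun _ => 1))
    have hd : ∀ C ∈ D, C.card ≤ d := by
      intro C hC
      obtain ⟨-, y, hy, h0, hyC⟩ := Arrangement.mem_flats.1 hC
      exact Arrangement.card_le hgp C y hyC
    rw [← Finset.filter_true_of_mem hd, card_le_eq_sum]
    apply Finset.sum_le_sum
    intro i _
    calc (lev D i).card ≤ (Finset.powersetCard i (Finset.univ : Finset (Fin n))).card := by
          apply Finset.card_le_card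
          intro C hC
          simp only [lev, Finset.mem_filter] at hC
          simp [Finset.mem_powersetCard, hC.2]
      _ = _ := by simp
  unfold gsum
  simp_rw [gchoose_nat]
  exact_mod_cast h2

/-- For a proper convex subset `S` with `|S| = ∑_{i=0}^d C(k,i)`,
`k ≥ d-1`: if `|S| ≤ ∑_{i=0}^d C(n-d,i)` then `|∂S| ≥ ∑_{i=0}^{d-1} (d-i)·C(k,i)`;
in particular this conclusion holds whenever `|S|` is at most half of the total
number of chambers and `n ≥ d²/ln 2 + 2d`. -/
theorem stmt8 {d n : ℕ} (𝓗 : Arrangement d n) (hgp : 𝓗.GeneralPosition)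
    (S : Set (Set (Fin d → ℝ))) (hS : S ⊆ 𝓗.chambers)
    (hproper : S ≠ 𝓗.chambers)
    (hconv : Convex ℝ (thickening S))
    (k : ℝ) (hk : (d : ℝ) - 1 ≤ k)
    (hcard : (S.ncard : ℝ) = ∑ i ∈ Finset.range (d + 1), gchoose k i) :
    (((S.ncard : ℝ) ≤ ∑ i ∈ Finset.range (d + 1), gchoose ((n : ℝ) - d) i) →
      (∑ i ∈ Finset.range d, ((d : ℝ) - i) * gchoose k i) ≤
        ((𝓗.edgeBoundary S).ncard : ℝ)) ∧
    ((2 * S.ncard ≤ (𝓗.chambers).ncard ∧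
        (d : ℝ) ^ 2 / Real.log 2 + 2 * d ≤ (n : ℝ)) →
      (∑ i ∈ Finset.range d, ((d : ℝ) - i) * gchoose k i) ≤
        ((𝓗.edgeBoundary S).ncard : ℝ)) := by
  have aux := stmt8_aux 𝓗 hgp S hS hproper hconv k hk hcard
  refine ⟨fun h => aux h, ?_⟩
  rintro ⟨h2, hn⟩
  apply aux
  have h3 := chambers_card_le 𝓗 hgp
  have h4 := half_bound hn
  have h5 : 2 * (S.ncard : ℝ) ≤ ((𝓗.chambers).ncard : ℝ) := by exact_mod_cast h2
  linarith
end
end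

section
/- Let S be an arbitrary subset of at most half of the chambers of a hyperplane arrangement 𝓗 in general position in ℝ². Assume |S| = Σ_{i=0}^2 C(k,i) = 1 + k + k(k−1)/2 for some real k ≥ 1, where C(k,i) denotes the generalized binomial coefficient. Then |∂S| ≥ k + 1. -/
open Set Topology

noncomputable section

section Abstract
open Finset

variable {n : ℕ}

def xU (T : Fin n → Fin n → ℝ) (i : Fin n) (t : ℝ) : Finset (Fin n) := by
  classical exact Finset.univ.filter (fun l => l ≠ i ∧ T i l < t)

def xphi (pw : Fin n → Fin n → Prop) (i : Fin n) (Z : Finset (Fin n)) : Finset (Fin n) := by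
  classical exact Finset.univ.filter (fun l => l ≠ i ∧ (l ∈ Z ↔ pw i l))

lemma mem_xU {T : Fin n → Fin n → ℝ} {i l : Fin n} {t : ℝ} :
    l ∈ xU T i t ↔ l ≠ i ∧ T i l < t := by
  simp [xU]

lemma mem_xphi {pw : Fin n → Fin n → Prop} {i l : Fin n} {Z : Finset (Fin n)} :
    l ∈ xphi pw i Z ↔ l ≠ i ∧ (l ∈ Z ↔ pw i l) := by
  simp [xphi]

lemma xphi_inj {pw : Fin n → Fin n → Prop} {i : Fin n} {Z Z' : Finset (Fin n)}
    (hZ : i ∉ Z) (hZ' : i ∉ Z') (h : xphi pw i Z = xphi pw i Z') : Z = Z' := by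
  ext l
  by_cases hl : l = i
  · subst hl; tauto
  · have := congrArg (fun s => l ∈ s) h
    simp only [mem_xphi, eq_iff_iff] at this
    tauto

lemma self_notMem_xphi {pw : Fin n → Fin n → Prop} {i : Fin n} {Z : Finset (Fin n)} :
    i ∉ xphi pw i Z := by simp [mem_xphi]

lemma exists_right {T : Fin n → Fin n → ℝ}
    (hT : ∀ i j l, j ≠ i → l ≠ i → T i j = T i l → j = l) {i j : Fin n} (hij : j ≠ i) :
    ∃ t, xU T i t = insert j (xU T i (T i j)) := by
  have h : ∀ᶠ t in 𝓝[>] (T i j), ∀ l : Fin n, l ≠ i → (T i l < t ↔ T i l ≤ T i j) := by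
    rw [Filter.eventually_all]
    intro l
    by_cases hl : T i l ≤ T i j
    · filter_upwards [self_mem_nhdsWithin] with t ht _
      have : T i j < t := ht
      exact ⟨fun _ => hl, fun _ => lt_of_le_of_lt hl this⟩
    · push Not at hl
      filter_upwards [nhdsWithin_le_nhds (Iio_mem_nhds hl)] with t ht _
      have : t < T i l := ht
      constructor <;> intro <;> linarith
  obtain ⟨t, ht⟩ := h.exists
  refine ⟨t, ?_⟩
  ext l
  simp only [mem_xU, Finset.mem_insert]
  constructor
  · rintro ⟨h1, h2⟩
    rcases ((ht l h1).1 h2).lt_or_eq with h3 | h3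
    · exact Or.inr ⟨h1, h3⟩
    · exact Or.inl (hT i l j h1 hij h3)
  · rintro (rfl | ⟨h1, h2⟩)
    · exact ⟨hij, (ht _ hij).2 le_rfl⟩
    · exact ⟨h1, (ht _ h1).2 h2.le⟩

/-- crossing structure -/
lemma cross {T : Fin n → Fin n → ℝ} {pw : Fin n → Fin n → Prop}
    (hCR : ∀ i j l, i ≠ j → l ≠ i → l ≠ j →
      (l ∈ xphi pw i (xU T i (T i j)) ↔ l ∈ xphi pw j (xU T j (T j i))))
    {i j : Fin n} (hij : i ≠ j) :
    ∃ ρ : Finset (Fin n), i ∉ ρ ∧ j ∉ ρ ∧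
      ((xphi pw i (xU T i (T i j)) = ρ ∧ xphi pw i (insert j (xU T i (T i j))) = insert j ρ) ∨
       (xphi pw i (xU T i (T i j)) = insert j ρ ∧ xphi pw i (insert j (xU T i (T i j))) = ρ)) ∧
      ((xphi pw j (xU T j (T j i)) = ρ ∧ xphi pw j (insert i (xU T j (T j i))) = insert i ρ) ∨
       (xphi pw j (xU T j (T j i)) = insert i ρ ∧ xphi pw j (insert i (xU T j (T j i))) = ρ)) := by
  refine ⟨(xphi pw i (xU T i (T i j))).erase j, ?_, by simp, ?_, ?_⟩
  · simp [mem_xphi]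
  · by_cases h : pw i j
    · left
      constructor
      · rw [Finset.erase_eq_of_notMem]; simp [mem_xphi, mem_xU, h]
      · ext l
        by_cases hl : l = j
        · subst hl; simp [mem_xphi, h, hij.symm]
        · simp [mem_xphi, hl]
    · right
      constructor
      · rw [Finset.insert_erase]; simp [mem_xphi, mem_xU, h, hij.symm]
      · ext l
        by_cases hl : l = j
        · subst hl; simp [mem_xphi, h]
        · simp [mem_xphi, hl]
  · have key : (xphi pw i (xU T i (T i j))).erase j = (xphi pw j (xU T j (T j i))).erase i := by
      ext l
      by_cases h1 : l = i
      · subst h1; simp [mem_xphi]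
      by_cases h2 : l = j
      · subst h2; simp [mem_xphi]
      simp only [Finset.mem_erase, h1, h2, hCR i j l hij h1 h2, ne_eq, not_false_eq_true, true_and]
    rw [key]
    by_cases h : pw j i
    · left
      constructor
      · rw [Finset.erase_eq_of_notMem]; simp [mem_xphi, mem_xU, h]
      · ext l
        by_cases hl : l = i
        · subst hl; simp [mem_xphi, h, hij]
        · simp [mem_xphi, hl]
    · right
      constructor
      · rw [Finset.insert_erase]; simp [mem_xphi, mem_xU, h, hij]
      · ext l
        by_cases hl : l = i
        · subst hl; simp [mem_xphi, h]
        · simp [mem_xphi, hl]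

/-- walking along a line -/
lemma walk {T : Fin n → Fin n → ℝ} {pw : Fin n → Fin n → Prop} {c : Finset (Fin n) → Prop}
    (hT : ∀ i j l, j ≠ i → l ≠ i → T i j = T i l → j = l) (i : Fin n)
    (h : ∀ j, j ≠ i → (c (xphi pw i (xU T i (T i j))) ↔ c (xphi pw i (insert j (xU T i (T i j)))))) :
    ∀ t, c (xphi pw i (xU T i t)) ↔ c (xphi pw i ∅) := by
  have : ∀ N : ℕ, ∀ t, (xU T i t).card = N → (c (xphi pw i (xU T i t)) ↔ c (xphi pw i ∅)) := by
    intro N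
    induction N using Nat.strong_induction_on with
    | _ N ih =>
      intro t ht
      rcases (xU T i t).eq_empty_or_nonempty with h0 | h0
      · rw [h0]
      · obtain ⟨j, hj, hmax⟩ := Finset.exists_max_image _ (fun l => T i l) h0
        have hj' := mem_xU.1 hj
        have hU : xU T i t = insert j (xU T i (T i j)) := by
          ext l
          simp only [Finset.mem_insert, mem_xU]
          constructor
          · intro hl
            rcases (hmax l (mem_xU.2 hl)).lt_or_eq with h3 | h3
            · exact Or.inr ⟨hl.1, h3⟩
            · exact Or.inl (hT i l j hl.1 hj'.1 h3)
          · rintro (rfl | hl)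
            · exact hj'
            · exact ⟨hl.1, hl.2.trans hj'.2⟩
        have hlt : (xU T i (T i j)).card < N := by
          rw [← ht, hU, Finset.card_insert_of_notMem]
          · omega
          · simp [mem_xU]
        rw [hU, ← h j hj'.1]
        exact ih _ hlt _ rfl
  intro t
  exact this _ t rfl

lemma sauer {F : Finset (Finset (Fin n))} (hSh : ∀ s : Finset (Fin n), s.card = 3 → ¬ F.Shatters s)
    (L : Finset (Fin n)) : (F.image (· ∩ L)).card ≤ 1 + L.card + L.card.choose 2 := by
  refine (Finset.card_le_card_shatterer _).trans ?_
  have hsub : (F.image (· ∩ L)).shatterer ⊆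
      L.powersetCard 0 ∪ L.powersetCard 1 ∪ L.powersetCard 2 := by
    intro s hs
    rw [Finset.mem_shatterer] at hs
    have hsL : s ⊆ L := by
      obtain ⟨t, ht, hst⟩ := hs.exists_superset
      obtain ⟨u, -, rfl⟩ := Finset.mem_image.1 ht
      exact hst.trans Finset.inter_subset_right
    have hFs : F.Shatters s := by
      intro t ht
      obtain ⟨u, hu, hut⟩ := hs ht
      obtain ⟨v, hv, rfl⟩ := Finset.mem_image.1 hu
      refine ⟨v, hv, ?_⟩
      rw [← hut]
      ext x
      simp only [Finset.mem_inter]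
      have := @hsL x
      tauto
    have hc : s.card ≤ 2 := by
      by_contra hc
      obtain ⟨u, hu, hu3⟩ := Finset.exists_subset_card_eq (show 3 ≤ s.card by omega)
      exact hSh u hu3 (hFs.mono_right hu)
    simp only [Finset.mem_union, Finset.mem_powersetCard, hsL, true_and]
    omega
  refine (Finset.card_le_card hsub).trans ?_
  refine (Finset.card_union_le _ _).trans ?_
  have := Finset.card_union_le (L.powersetCard 0) (L.powersetCard 1)
  simp only [Finset.card_powersetCard, Nat.choose_zero_right, Nat.choose_one_right] at *
  omega

def xBd (T : Fin n → Fin n → ℝ) (pw : Fin n → Fin n → Prop) (c : Finset (Fin n) → Prop)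
    (i : Fin n) (t : ℝ) : Prop :=
  ¬ (c (xphi pw i (xU T i t)) ↔ c (insert i (xphi pw i (xU T i t))))

def xM (T : Fin n → Fin n → ℝ) (pw : Fin n → Fin n → Prop) (c : Finset (Fin n) → Prop)
    (i : Fin n) : Prop :=
  ∃ j, j ≠ i ∧ ¬ (c (xphi pw i (xU T i (T i j))) ↔ c (xphi pw i (insert j (xU T i (T i j)))))

def xQ (T : Fin n → Fin n → ℝ) (pw : Fin n → Fin n → Prop) (c : Finset (Fin n) → Prop) :
    Finset (Fin n × Finset (Fin n)) := by
  classical exact Finset.univ.filter (fun p : Fin n × Finset (Fin n) =>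
    (∃ t, p.2 = xphi pw p.1 (xU T p.1 t)) ∧ ¬ (c p.2 ↔ c (insert p.1 p.2)))

def xL (T : Fin n → Fin n → ℝ) (pw : Fin n → Fin n → Prop) (c : Finset (Fin n) → Prop) :
    Finset (Fin n) := by
  classical exact Finset.univ.filter (fun i => (∃ t, xBd T pw c i t) ∨ xM T pw c i)

lemma mem_xQ {T : Fin n → Fin n → ℝ} {pw : Fin n → Fin n → Prop} {c : Finset (Fin n) → Prop}
    {p : Fin n × Finset (Fin n)} : p ∈ xQ T pw c ↔
    (∃ t, p.2 = xphi pw p.1 (xU T p.1 t)) ∧ ¬ (c p.2 ↔ c (insert p.1 p.2)) := by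
  simp [xQ]

lemma mem_xL {T : Fin n → Fin n → ℝ} {pw : Fin n → Fin n → Prop} {c : Finset (Fin n) → Prop}
    {i : Fin n} : i ∈ xL T pw c ↔ (∃ t, xBd T pw c i t) ∨ xM T pw c i := by
  simp [xL]

lemma card_L_le {T : Fin n → Fin n → ℝ} {pw : Fin n → Fin n → Prop} {c : Finset (Fin n) → Prop}
    (hT : ∀ i j l, j ≠ i → l ≠ i → T i j = T i l → j = l)
    (hCR : ∀ i j l, i ≠ j → l ≠ i → l ≠ j →
      (l ∈ xphi pw i (xU T i (T i j)) ↔ l ∈ xphi pw j (xU T j (T j i)))) :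
    (xL T pw c).card ≤ (xQ T pw c).card := by
  classical
  have hex : ∀ l : Fin n, l ∈ xL T pw c → ∃ p ∈ xQ T pw c,
      (p.1 = l ∧ ∃ t, p.2 = xphi pw l (xU T l t) ∧
        ∀ t', xBd T pw c l t' → (xU T l t).card ≤ (xU T l t').card) ∨
      (∃ i, i ≠ l ∧ p = (i, xphi pw i (insert l (xU T i (T i l)))) ∧ xBd T pw c i (T i l)) := by
    intro l hl
    by_cases hA : ∃ t, xBd T pw c l t
    · have hP : ∃ N, ∃ t, xBd T pw c l t ∧ (xU T l t).card = N := by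
        obtain ⟨t, ht⟩ := hA
        exact ⟨_, t, ht, rfl⟩
      obtain ⟨t, ht, htN⟩ := Nat.find_spec hP
      refine ⟨(l, xphi pw l (xU T l t)), mem_xQ.2 ⟨⟨t, rfl⟩, ht⟩, Or.inl ⟨rfl, t, rfl, ?_⟩⟩
      intro t' ht'
      rw [htN]
      exact Nat.find_min' hP ⟨t', ht', rfl⟩
    · have hM : xM T pw c l := (mem_xL.1 hl).resolve_left hA
      push Not at hA
      simp only [xBd, not_not] at hA
      obtain ⟨i, hil, hc⟩ := hM
      obtain ⟨ρ, hiρ, hlρ, h1, h2⟩ := cross hCR hil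
      obtain ⟨t1, ht1⟩ := exists_right hT hil
      obtain ⟨t2, ht2⟩ := exists_right hT hil.symm
      have a1 := hA (T l i)
      have a2 := hA t1
      rw [ht1] at a2
      have hcomm : insert l (insert i ρ) = insert i (insert l ρ) := Finset.insert_comm _ _ _
      have hρ : ¬ (c ρ ↔ c (insert i ρ)) ∧ ¬ (c (insert l ρ) ↔ c (insert i (insert l ρ))) := by
        rcases h2 with ⟨e1, e2⟩ | ⟨e1, e2⟩ <;> rw [e1] at a1 hc <;> rw [e2] at a2 hc <;>
          rw [← hcomm] <;> tauto
      refine ⟨(i, xphi pw i (insert l (xU T i (T i l)))), mem_xQ.2 ⟨⟨t2, by rw [ht2]⟩, ?_⟩,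
        Or.inr ⟨i, hil, rfl, ?_⟩⟩
      · rcases h1 with ⟨e1, e2⟩ | ⟨e1, e2⟩
        · simp only [e2]; exact hρ.2
        · simp only [e2]; exact hρ.1
      · rcases h1 with ⟨e1, e2⟩ | ⟨e1, e2⟩
        · simp only [xBd, e1]; exact hρ.1
        · simp only [xBd, e1]; exact hρ.2
  choose! f hfQ hf using hex
  have hni : ∀ i t, i ∉ xU T i t := by intro i t; simp [mem_xU]
  -- the mixed case
  have mixed : ∀ a b, a ∈ xL T pw c → b ∈ xL T pw c → f a = f b →
      ((f a).1 = a ∧ ∃ t, (f a).2 = xphi pw a (xU T a t) ∧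
        ∀ t', xBd T pw c a t' → (xU T a t).card ≤ (xU T a t').card) →
      (∃ i, i ≠ b ∧ f b = (i, xphi pw i (insert b (xU T i (T i b)))) ∧ xBd T pw c i (T i b)) →
      False := by
    intro a b _ _ hab ⟨h1, t, h2, h3⟩ ⟨i, hib, h4, h5⟩
    have hia : i = a := by rw [← h1, hab, h4]
    subst hia
    rw [hab, h4] at h2
    have h6 := xphi_inj (by simp [mem_xU, hib]) (hni _ _) h2
    have h7 := h3 _ h5
    rw [← h6, Finset.card_insert_of_notMem (by simp [mem_xU])] at h7
    omega
  refine Finset.card_le_card_of_injOn f (fun l hl => hfQ l hl) ?_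
  intro a ha b hb hab
  have ha' : a ∈ xL T pw c := ha
  have hb' : b ∈ xL T pw c := hb
  rcases hf a ha' with h1 | h1 <;> rcases hf b hb' with h2 | h2
  · rw [← h1.1, hab, h2.1]
  · exact (mixed a b ha' hb' hab h1 h2).elim
  · exact (mixed b a hb' ha' hab.symm h2 h1).elim
  · obtain ⟨i, hia, e1, -⟩ := h1
    obtain ⟨i', hib, e2, -⟩ := h2
    rw [e1, e2] at hab
    have hii : i = i' := congrArg Prod.fst hab
    subst hii
    have h6 := xphi_inj (by simp [mem_xU, hia]) (by simp [mem_xU, hib]) (congrArg Prod.snd hab)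
    have ha1 : a ∈ insert b (xU T i (T i b)) := by rw [← h6]; simp
    have hb1 : b ∈ insert a (xU T i (T i a)) := by rw [h6]; simp
    simp only [Finset.mem_insert, mem_xU] at ha1 hb1
    rcases ha1 with h | h
    · exact h
    rcases hb1 with h' | h'
    · exact h'.symm
    · linarith [h.2, h'.2]

lemma abstract_main {T : Fin n → Fin n → ℝ} {pw : Fin n → Fin n → Prop}
    {F S : Finset (Finset (Fin n))}
    (hT : ∀ i j l, j ≠ i → l ≠ i → T i j = T i l → j = l)
    (hCR : ∀ i j l, i ≠ j → l ≠ i → l ≠ j →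
      (l ∈ xphi pw i (xU T i (T i j)) ↔ l ∈ xphi pw j (xU T j (T j i))))
    (hF : ∀ i t, xphi pw i (xU T i t) ∈ F)
    (hW : ∀ σ ∈ F, ∀ τ ∈ F, σ ≠ τ → ∃ i, (i ∈ σ ↔ i ∉ τ) ∧ ∃ t, σ.erase i = xphi pw i (xU T i t))
    (hSh : ∀ s : Finset (Fin n), s.card = 3 → ¬ F.Shatters s)
    (hSF : S ⊆ F) (hhalf : 2 * S.card ≤ F.card)
    (k : ℝ) (hk : 1 ≤ k) (hcard : (S.card : ℝ) = 1 + k + k * (k - 1) / 2) :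
    k + 1 ≤ ((xQ T pw (· ∈ S)).card : ℝ) := by
  classical
  set c : Finset (Fin n) → Prop := (· ∈ S) with hc
  have hLQ := card_L_le (c := c) hT hCR
  set L := xL T pw c with hL
  set m := (xQ T pw c).card with hm
  have hch : ∀ a : ℕ, ((a.choose 2 : ℕ) : ℝ) = a * (a - 1) / 2 := fun a => Nat.cast_choose_two ℝ a
  by_cases hLu : L = Finset.univ
  · have h1 := sauer hSh Finset.univ
    have h2 : F.image (· ∩ Finset.univ) = F := by simp
    rw [h2, Finset.card_univ, Fintype.card_fin] at h1
    rw [hLu, Finset.card_univ, Fintype.card_fin] at hLQ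
    have h3 : (2 * (S.card : ℝ)) ≤ 1 + n + n * (n - 1) / 2 := by
      rw [← hch]; exact_mod_cast hhalf.trans h1
    have h4 : (n : ℝ) ≤ m := by exact_mod_cast hLQ
    rw [hcard] at h3
    by_contra hcon
    push Not at hcon
    have h5 : (n : ℝ) - 1 < k := by linarith
    have h6 : (0 : ℝ) ≤ ((n : ℝ) - 1) * (n - 2) := by
      have : n = 0 ∨ n = 1 ∨ 2 ≤ n := by omega
      rcases this with h | h | h
      · subst h; norm_num
      · subst h; norm_num
      · have : (2 : ℝ) ≤ n := by exact_mod_cast h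
        apply mul_nonneg <;> linarith
    nlinarith [mul_pos (sub_pos.2 h5) (show (0:ℝ) < k + n by have : (0:ℝ) ≤ n := n.cast_nonneg; linarith)]
  · obtain ⟨h, hh⟩ : ∃ h, h ∉ L := by
      by_contra hcon
      push Not at hcon
      exact hLu (Finset.eq_univ_iff_forall.2 hcon)
    -- colors on lines outside L
    have hcol : ∀ i, i ∉ L → ∀ t, (c (xphi pw i (xU T i t)) ↔ c (xphi pw i ∅)) ∧
        (c (insert i (xphi pw i (xU T i t))) ↔ c (xphi pw i ∅)) := by
      intro i hi t
      rw [hL, mem_xL] at hi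
      push Not at hi
      obtain ⟨hi1, hi2⟩ := hi
      have w := walk (c := c) hT i (by
        intro j hj
        by_contra hcon
        exact hi2 ⟨j, hj, hcon⟩) t
      have := hi1 t
      simp only [xBd, not_not] at this
      exact ⟨w, this.symm.trans w⟩
    have hsame : ∀ i, i ∉ L → (c (xphi pw i ∅) ↔ c (xphi pw h ∅)) := by
      intro i hi
      by_cases hih : i = h
      · rw [hih]
      obtain ⟨ρ, hiρ, hhρ, h1, h2⟩ := cross hCR hih
      obtain ⟨t1, ht1⟩ := exists_right hT hih
      obtain ⟨t2, ht2⟩ := exists_right hT (Ne.symm hih)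
      have a1 := (hcol i hi (T i h)).1
      have a2 := (hcol i hi t2).1
      have b1 := (hcol h hh (T h i)).1
      have b2 := (hcol h hh t1).1
      rw [ht2] at a2
      rw [ht1] at b2
      have A : c ρ ↔ c (xphi pw i ∅) := by
        rcases h1 with ⟨e1, e2⟩ | ⟨e1, e2⟩
        · rw [e1] at a1; exact a1
        · rw [e2] at a2; exact a2
      have B : c ρ ↔ c (xphi pw h ∅) := by
        rcases h2 with ⟨e1, e2⟩ | ⟨e1, e2⟩
        · rw [e1] at b1; exact b1
        · rw [e2] at b2; exact b2
      exact A.symm.trans B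
    set κ := c (xphi pw h ∅) with hκ
    set X := F.filter (fun σ => ¬ (c σ ↔ κ)) with hX
    have hSX : S.card ≤ X.card := by
      by_cases hk' : κ
      · have : X = F \ S := by
          ext σ; simp [hX, hk', hc]
        rw [this, Finset.card_sdiff_of_subset hSF]
        omega
      · refine Finset.card_le_card ?_
        intro σ hσ
        simp [hX, hk', hc, hσ, hSF hσ]
    have hinj : ∀ σ ∈ X, ∀ τ ∈ F, σ ∩ L = τ ∩ L → σ = τ := by
      intro σ hσ τ hτ hst
      by_contra hne
      obtain ⟨hσF, hσc⟩ := Finset.mem_filter.1 hσ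
      obtain ⟨i, hi, t, ht⟩ := hW σ hσF τ hτ hne
      have hiL : i ∉ L := by
        intro hiL
        have := congrArg (fun s => i ∈ s) hst
        simp only [Finset.mem_inter, hiL, and_true, eq_iff_iff] at this
        tauto
      apply hσc
      rw [← hsame i hiL]
      by_cases his : i ∈ σ
      · rw [← (hcol i hiL t).2, ← ht, Finset.insert_erase his]
      · rw [← (hcol i hiL t).1, ← ht, Finset.erase_eq_of_notMem his]
    have hXi : (X.image (· ∩ L)).card = X.card := by
      apply Finset.card_image_of_injOn
      intro σ hσ τ hτ hst
      exact hinj σ hσ τ (Finset.mem_filter.1 hτ).1 hst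
    set Y := L.image (fun j => xphi pw h (xU T h (T h j)) ∩ L) with hY
    have hne : ∀ j ∈ L, j ≠ h := fun j hj hjh => hh (hjh ▸ hj)
    have hYc : Y.card = L.card := by
      apply Finset.card_image_of_injOn
      have key : ∀ a ∈ L, ∀ b ∈ L, xphi pw h (xU T h (T h a)) ∩ L = xphi pw h (xU T h (T h b)) ∩ L →
          ¬ T h a < T h b := by
        intro a ha b hb hab hlt
        have := congrArg (fun s => a ∈ s) hab
        simp only [Finset.mem_inter, ha, and_true, mem_xphi, mem_xU, hne a ha, lt_irrefl, hlt,
          ne_eq, not_false_eq_true, true_and, eq_iff_iff] at this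
        tauto
      intro a ha b hb hab
      apply hT h a b (hne a ha) (hne b hb)
      exact le_antisymm (not_lt.1 (key b hb a ha hab.symm)) (not_lt.1 (key a ha b hb hab))
    have hdisj : Disjoint (X.image (· ∩ L)) Y := by
      rw [Finset.disjoint_left]
      intro s hs hs'
      obtain ⟨σ, hσ, rfl⟩ := Finset.mem_image.1 hs
      obtain ⟨j, hj, hjs⟩ := Finset.mem_image.1 hs'
      have := hinj σ hσ _ (hF h (T h j)) hjs.symm
      apply (Finset.mem_filter.1 hσ).2
      rw [this]
      exact (hcol h hh _).1
    have hsub : X.image (· ∩ L) ∪ Y ⊆ F.image (· ∩ L) := by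
      apply Finset.union_subset
      · exact Finset.image_subset_image (Finset.filter_subset _ _)
      · intro s hs
        obtain ⟨j, hj, rfl⟩ := Finset.mem_image.1 hs
        exact Finset.mem_image.2 ⟨_, hF h (T h j), rfl⟩
    have h1 := (Finset.card_le_card hsub).trans (sauer hSh L)
    rw [Finset.card_union_of_disjoint hdisj, hXi, hYc] at h1
    have h2 : L.card.choose 2 ≤ m.choose 2 := Nat.choose_le_choose 2 hLQ
    have h3 : (S.card : ℝ) ≤ 1 + m * (m - 1) / 2 := by
      rw [← hch]
      have : S.card ≤ 1 + m.choose 2 := by omega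
      exact_mod_cast this
    rw [hcard] at h3
    by_contra hcon
    push Not at hcon
    nlinarith [show (0:ℝ) ≤ m from m.cast_nonneg]

end Abstract

section Geometry
open Finset

variable {n : ℕ} (𝓗 : Arrangement 2 n)

def gg (l : Fin n) (x : Fin 2 → ℝ) : ℝ :=
  𝓗.normal l 0 * x 0 + 𝓗.normal l 1 * x 1 - 𝓗.offset l

def DD (i l : Fin n) : ℝ := 𝓗.normal i 0 * 𝓗.normal l 1 - 𝓗.normal i 1 * 𝓗.normal l 0

def qq (i : Fin n) : ℝ := 𝓗.normal i 0 ^ 2 + 𝓗.normal i 1 ^ 2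

def pt (i : Fin n) (t : ℝ) : Fin 2 → ℝ :=
  ![𝓗.offset i * 𝓗.normal i 0 / qq 𝓗 i - t * 𝓗.normal i 1,
    𝓗.offset i * 𝓗.normal i 1 / qq 𝓗 i + t * 𝓗.normal i 0]

def TT (i l : Fin n) : ℝ := - gg 𝓗 l (pt 𝓗 i 0) / DD 𝓗 i l

def pp (i l : Fin n) : Prop := 0 < DD 𝓗 i l

def PP (x : Fin 2 → ℝ) : Finset (Fin n) := by
  classical exact Finset.univ.filter (fun l => 0 < gg 𝓗 l x)

def FF : Finset (Finset (Fin n)) := by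
  classical exact Finset.univ.filter (fun σ => ∃ x, (∀ l, gg 𝓗 l x ≠ 0) ∧ PP 𝓗 x = σ)

def cell (σ : Finset (Fin n)) : Set (Fin 2 → ℝ) := {x | (∀ l, gg 𝓗 l x ≠ 0) ∧ PP 𝓗 x = σ}

variable {𝓗}

lemma mem_PP {x : Fin 2 → ℝ} {l : Fin n} : l ∈ PP 𝓗 x ↔ 0 < gg 𝓗 l x := by simp [PP]

lemma mem_FF {σ : Finset (Fin n)} : σ ∈ FF 𝓗 ↔ ∃ x, (∀ l, gg 𝓗 l x ≠ 0) ∧ PP 𝓗 x = σ := by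
  simp [FF]

lemma qq_pos (i : Fin n) : 0 < qq 𝓗 i := by
  have h := 𝓗.normal_ne i
  have h0 : 0 ≤ qq 𝓗 i := by unfold qq; positivity
  refine lt_of_le_of_ne h0 ?_
  intro h1
  apply h
  unfold qq at h1
  have h2 : 𝓗.normal i 0 = 0 := by nlinarith [sq_nonneg (𝓗.normal i 0), sq_nonneg (𝓗.normal i 1)]
  have h3 : 𝓗.normal i 1 = 0 := by nlinarith [sq_nonneg (𝓗.normal i 0), sq_nonneg (𝓗.normal i 1)]
  ext j
  fin_cases j
  · simpa using h2
  · simpa using h3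

lemma gg_cont (l : Fin n) : Continuous (gg 𝓗 l) := by
  unfold gg; fun_prop

lemma mem_H {x : Fin 2 → ℝ} {l : Fin n} : x ∈ 𝓗.H l ↔ gg 𝓗 l x = 0 := by
  simp [Arrangement.H, gg, Fin.sum_univ_two, sub_eq_zero]

lemma mem_pos {x : Fin 2 → ℝ} {l : Fin n} : x ∈ 𝓗.pos l ↔ 0 < gg 𝓗 l x := by
  simp [Arrangement.pos, gg, Fin.sum_univ_two]

lemma mem_neg {x : Fin 2 → ℝ} {l : Fin n} : x ∈ 𝓗.neg l ↔ gg 𝓗 l x < 0 := by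
  simp [Arrangement.neg, gg, Fin.sum_univ_two]

lemma mem_free {x : Fin 2 → ℝ} : x ∈ 𝓗.free ↔ ∀ l, gg 𝓗 l x ≠ 0 := by
  simp [Arrangement.free, mem_H]

lemma DD_ne (hgp : 𝓗.GeneralPosition) {i l : Fin n} (h : i ≠ l) : DD 𝓗 i l ≠ 0 := by
  intro h0
  have h1 := hgp.1 {i, l} (by rw [Finset.card_pair h])
  have h2 := h1.comp ![⟨i, by simp⟩, ⟨l, by simp⟩] (by
    intro a b hab
    fin_cases a <;> fin_cases b <;> simp_all)
  have h3 : LinearIndependent ℝ ![𝓗.normal i, 𝓗.normal l] := by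
    convert h2 using 1
    ext a b
    fin_cases a <;> rfl
  rw [LinearIndependent.pair_iff] at h3
  unfold DD at h0
  have h4 := h3 (𝓗.normal l 1) (- 𝓗.normal i 1) (by
    ext j; fin_cases j <;> simp <;> linarith)
  have h5 := h3 (𝓗.normal l 0) (- 𝓗.normal i 0) (by
    ext j; fin_cases j <;> simp <;> linarith)
  apply 𝓗.normal_ne i
  ext j; fin_cases j
  · simpa using h5.2
  · simpa using h4.2

lemma no_three (hgp : 𝓗.GeneralPosition) {i j l : Fin n} (hij : i ≠ j) (hil : i ≠ l) (hjl : j ≠ l)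
    {x : Fin 2 → ℝ} (h1 : gg 𝓗 i x = 0) (h2 : gg 𝓗 j x = 0) (h3 : gg 𝓗 l x = 0) : False := by
  have h := hgp.2 {i, j, l} (Finset.card_eq_three.2 ⟨i, j, l, hij, hil, hjl, rfl⟩)
  have : x ∈ ⋂ a ∈ ({i, j, l} : Finset (Fin n)), 𝓗.H a := by
    simp [mem_H, h1, h2, h3]
  rw [h] at this
  exact this

lemma gg_pt_self (i : Fin n) (t : ℝ) : gg 𝓗 i (pt 𝓗 i t) = 0 := by
  have h := (qq_pos (𝓗 := 𝓗) i).ne'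
  simp only [gg, pt, Matrix.cons_val_zero, Matrix.cons_val_one]
  field_simp
  unfold qq
  ring

lemma gg_pt (hgp : 𝓗.GeneralPosition) {i l : Fin n} (h : i ≠ l) (t : ℝ) :
    gg 𝓗 l (pt 𝓗 i t) = DD 𝓗 i l * (t - TT 𝓗 i l) := by
  have h1 := DD_ne hgp h
  have h2 : DD 𝓗 i l * (t - TT 𝓗 i l) = DD 𝓗 i l * t + gg 𝓗 l (pt 𝓗 i 0) := by
    unfold TT; field_simp; ring
  rw [h2]
  simp only [gg, pt, DD, Matrix.cons_val_zero, Matrix.cons_val_one]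
  ring

lemma exists_pt {i : Fin n} {z : Fin 2 → ℝ} (h : gg 𝓗 i z = 0) : ∃ t, z = pt 𝓗 i t := by
  have h1 := (qq_pos (𝓗 := 𝓗) i).ne'
  refine ⟨(𝓗.normal i 0 * z 1 - 𝓗.normal i 1 * z 0) / qq 𝓗 i, ?_⟩
  unfold gg at h
  have ho : 𝓗.offset i = 𝓗.normal i 0 * z 0 + 𝓗.normal i 1 * z 1 := by linarith
  ext j
  fin_cases j
  · simp only [pt, ho, Fin.zero_eta, Matrix.cons_val_zero]
    field_simp
    unfold qq; ring
  · simp only [pt, ho, Fin.mk_one, Matrix.cons_val_one, Matrix.cons_val_zero, Matrix.cons_val_fin_one]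
    field_simp
    unfold qq; ring

lemma TT_inj (hgp : 𝓗.GeneralPosition) (i j l : Fin n) (hj : j ≠ i) (hl : l ≠ i)
    (h : TT 𝓗 i j = TT 𝓗 i l) : j = l := by
  by_contra hne
  refine no_three hgp hj.symm hl.symm hne (gg_pt_self i (TT 𝓗 i j)) ?_ ?_
  · rw [gg_pt hgp hj.symm]; simp
  · rw [gg_pt hgp hl.symm, h]; simp

lemma mem_e (hgp : 𝓗.GeneralPosition) {i l : Fin n} (hl : l ≠ i) {t : ℝ} (ht : t ≠ TT 𝓗 i l) :
    l ∈ xphi (pp 𝓗) i (xU (TT 𝓗) i t) ↔ 0 < gg 𝓗 l (pt 𝓗 i t) := by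
  rw [gg_pt hgp hl.symm]
  simp only [mem_xphi, mem_xU, pp, ne_eq, hl, not_false_eq_true, true_and]
  have hD := DD_ne hgp hl.symm
  rcases lt_or_gt_of_ne ht with h | h <;> rcases lt_or_gt_of_ne hD with h' | h'
  · have : 0 < DD 𝓗 i l * (t - TT 𝓗 i l) := mul_pos_of_neg_of_neg h' (by linarith)
    exact iff_of_true (iff_of_false h.not_gt h'.not_gt) this
  · have : DD 𝓗 i l * (t - TT 𝓗 i l) < 0 := mul_neg_of_pos_of_neg h' (by linarith)
    exact iff_of_false (fun e => h.not_gt (e.2 h')) this.not_gt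
  · have : DD 𝓗 i l * (t - TT 𝓗 i l) < 0 := mul_neg_of_neg_of_pos h' (by linarith)
    exact iff_of_false (fun e => h'.not_gt (e.1 h)) this.not_gt
  · have : 0 < DD 𝓗 i l * (t - TT 𝓗 i l) := mul_pos h' (by linarith)
    exact iff_of_true (iff_of_true h h') this

lemma pt_cross (hgp : 𝓗.GeneralPosition) {i j : Fin n} (h : i ≠ j) :
    pt 𝓗 i (TT 𝓗 i j) = pt 𝓗 j (TT 𝓗 j i) := by
  have hD := DD_ne hgp h
  have a1 := gg_pt_self (𝓗 := 𝓗) i (TT 𝓗 i j)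
  have a2 := gg_pt_self (𝓗 := 𝓗) j (TT 𝓗 j i)
  have a3 : gg 𝓗 j (pt 𝓗 i (TT 𝓗 i j)) = 0 := by rw [gg_pt hgp h]; simp
  have a4 : gg 𝓗 i (pt 𝓗 j (TT 𝓗 j i)) = 0 := by rw [gg_pt hgp h.symm]; simp
  generalize pt 𝓗 i (TT 𝓗 i j) = x at *
  generalize pt 𝓗 j (TT 𝓗 j i) = y at *
  unfold gg at a1 a2 a3 a4
  unfold DD at hD
  ext k
  fin_cases k
  · apply mul_left_cancel₀ hD
    simp only [Fin.zero_eta]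
    linear_combination (𝓗.normal j 1) * (a1 - a4) - (𝓗.normal i 1) * (a3 - a2)
  · apply mul_left_cancel₀ hD
    simp only [Fin.mk_one]
    linear_combination (𝓗.normal i 0) * (a3 - a2) - (𝓗.normal j 0) * (a1 - a4)

lemma hCR (hgp : 𝓗.GeneralPosition) (i j l : Fin n) (hij : i ≠ j) (hi : l ≠ i) (hj : l ≠ j) :
    (l ∈ xphi (pp 𝓗) i (xU (TT 𝓗) i (TT 𝓗 i j)) ↔
      l ∈ xphi (pp 𝓗) j (xU (TT 𝓗) j (TT 𝓗 j i))) := by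
  rw [mem_e hgp hi, mem_e hgp hj, pt_cross hgp hij]
  · intro h; exact hi (TT_inj hgp j i l hij hj h).symm
  · intro h; exact hj (TT_inj hgp i j l hij.symm hi h).symm

lemma hF (hgp : 𝓗.GeneralPosition) (i : Fin n) (t : ℝ) :
    xphi (pp 𝓗) i (xU (TT 𝓗) i t) ∈ FF 𝓗 ∧
    insert i (xphi (pp 𝓗) i (xU (TT 𝓗) i t)) ∈ FF 𝓗 := by
  have h : ∀ᶠ t' in 𝓝[<] t, ∀ l : Fin n, t' ≠ TT 𝓗 i l ∧ (TT 𝓗 i l < t' ↔ TT 𝓗 i l < t) := by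
    rw [Filter.eventually_all]
    intro l
    by_cases hl : TT 𝓗 i l < t
    · filter_upwards [nhdsWithin_le_nhds (Ioi_mem_nhds hl)] with t' ht'
      have : TT 𝓗 i l < t' := ht'
      exact ⟨this.ne', by simp [this, hl]⟩
    · filter_upwards [self_mem_nhdsWithin] with t' ht'
      have h1 : t' < t := ht'
      push Not at hl
      have h2 : t' < TT 𝓗 i l := by linarith
      exact ⟨ne_of_lt h2, by
        constructor <;> intro <;> linarith⟩
  obtain ⟨t', ht'⟩ := h.exists
  have hU : xU (TT 𝓗) i t = xU (TT 𝓗) i t' := by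
    ext l; simp [mem_xU, (ht' l).2]
  rw [hU]
  set z := pt 𝓗 i t' with hz
  have hzl : ∀ l, l ≠ i → gg 𝓗 l z ≠ 0 := by
    intro l hl
    rw [hz, gg_pt hgp hl.symm]
    exact mul_ne_zero (DD_ne hgp hl.symm) (sub_ne_zero.2 (ht' l).1)
  have hzi : gg 𝓗 i z = 0 := gg_pt_self i t'
  have hgi : ∀ ε : ℝ, gg 𝓗 i (z + ε • 𝓗.normal i) = ε * qq 𝓗 i := by
    intro ε
    unfold gg at hzi ⊢
    simp only [Pi.add_apply, Pi.smul_apply, smul_eq_mul, qq]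
    linear_combination hzi
  have hcl : ∀ l, Continuous (fun ε : ℝ => gg 𝓗 l (z + ε • 𝓗.normal i)) := by
    intro l
    exact (gg_cont l).comp (by fun_prop)
  have hev : ∀ᶠ ε in 𝓝 (0 : ℝ), ∀ l, l ≠ i → gg 𝓗 l (z + ε • 𝓗.normal i) ≠ 0 ∧
      (0 < gg 𝓗 l (z + ε • 𝓗.normal i) ↔ 0 < gg 𝓗 l z) := by
    rw [Filter.eventually_all]
    intro l
    by_cases hl : l = i
    · simp [hl]
    have h0 : (fun ε : ℝ => gg 𝓗 l (z + ε • 𝓗.normal i)) 0 = gg 𝓗 l z := by simp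
    rcases lt_or_gt_of_ne (hzl l hl) with hs | hs
    · filter_upwards [(hcl l).continuousAt.eventually_lt_const (h0 ▸ hs)] with ε hε _
      exact ⟨hε.ne, by constructor <;> intro <;> linarith⟩
    · filter_upwards [(hcl l).continuousAt.eventually_const_lt (h0 ▸ hs)] with ε hε _
      exact ⟨hε.ne', by simp [hε, hs]⟩
  have hq := qq_pos (𝓗 := 𝓗) i
  constructor
  · obtain ⟨ε, hε, hneg⟩ := ((hev.filter_mono nhdsWithin_le_nhds).and
      (self_mem_nhdsWithin (s := Set.Iio (0:ℝ)))).exists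
    have hneg' : ε < 0 := hneg
    have hn := mul_neg_of_neg_of_pos hneg' hq
    refine mem_FF.2 ⟨z + ε • 𝓗.normal i, ?_, ?_⟩
    · intro l
      by_cases hl : l = i
      · subst hl; rw [hgi]; exact hn.ne
      · exact (hε l hl).1
    · ext l
      by_cases hl : l = i
      · subst hl; simp [mem_PP, hgi, mem_xphi, hn.le]
      · rw [mem_PP, (hε l hl).2, mem_e hgp hl (ht' l).1]
  · obtain ⟨ε, hε, hpos⟩ := ((hev.filter_mono nhdsWithin_le_nhds).and
      (self_mem_nhdsWithin (s := Set.Ioi (0:ℝ)))).exists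
    have hpos' : 0 < ε := hpos
    have hn := mul_pos hpos' hq
    refine mem_FF.2 ⟨z + ε • 𝓗.normal i, ?_, ?_⟩
    · intro l
      by_cases hl : l = i
      · subst hl; rw [hgi]; exact hn.ne'
      · exact (hε l hl).1
    · ext l
      by_cases hl : l = i
      · subst hl; simp [mem_PP, hgi, hpos', hq]
      · rw [mem_PP, (hε l hl).2, Finset.mem_insert, mem_e hgp hl (ht' l).1]
        simp [hl, hz]

lemma hSh (hgp : 𝓗.GeneralPosition) (s : Finset (Fin n)) (hs : s.card = 3) :
    ¬ (FF 𝓗).Shatters s := by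
  classical
  obtain ⟨i, j, k, hij, hik, hjk, rfl⟩ := Finset.card_eq_three.1 hs
  intro hsh
  set w : Fin n → ℝ := fun l => if l = i then DD 𝓗 j k else if l = j then DD 𝓗 k i else DD 𝓗 i j
    with hw
  have wi : w i = DD 𝓗 j k := by simp [hw]
  have wj : w j = DD 𝓗 k i := by simp [hw, hij.symm]
  have wk : w k = DD 𝓗 i j := by simp [hw, hik.symm, hjk.symm]
  have ni : w i ≠ 0 := wi ▸ DD_ne hgp hjk
  have nj : w j ≠ 0 := wj ▸ DD_ne hgp hik.symm
  have nk : w k ≠ 0 := wk ▸ DD_ne hgp hij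
  obtain ⟨u, hu, hu'⟩ := hsh (t := ({i, j, k} : Finset (Fin n)).filter (fun l => 0 < w l))
    (Finset.filter_subset _ _)
  obtain ⟨v, hv, hv'⟩ := hsh (t := ({i, j, k} : Finset (Fin n)).filter (fun l => ¬ 0 < w l))
    (Finset.filter_subset _ _)
  obtain ⟨x, hx, rfl⟩ := mem_FF.1 hu
  obtain ⟨y, hy, rfl⟩ := mem_FF.1 hv
  have px : ∀ l ∈ ({i, j, k} : Finset (Fin n)), w l ≠ 0 → 0 < w l * gg 𝓗 l x := by
    intro l hl hn
    have := congrArg (fun s => l ∈ s) hu'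
    simp only [Finset.mem_inter, hl, true_and, Finset.mem_filter, mem_PP, eq_iff_iff] at this
    rcases lt_or_gt_of_ne hn with h | h
    · have h1 : ¬ 0 < gg 𝓗 l x := fun h' => absurd (this.1 h') (by linarith)
      exact mul_pos_of_neg_of_neg h (lt_of_le_of_ne (not_lt.1 h1) (hx l))
    · exact mul_pos h (this.2 h)
  have py : ∀ l ∈ ({i, j, k} : Finset (Fin n)), w l ≠ 0 → w l * gg 𝓗 l y < 0 := by
    intro l hl hn
    have := congrArg (fun s => l ∈ s) hv'
    simp only [Finset.mem_inter, hl, true_and, Finset.mem_filter, mem_PP, eq_iff_iff] at this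
    rcases lt_or_gt_of_ne hn with h | h
    · exact mul_neg_of_neg_of_pos h (this.2 (by linarith))
    · have h1 : ¬ 0 < gg 𝓗 l y := fun h' => absurd h (this.1 h')
      exact mul_neg_of_pos_of_neg h (lt_of_le_of_ne (not_lt.1 h1) (hy l))
  have hsum : w i * gg 𝓗 i x + w j * gg 𝓗 j x + w k * gg 𝓗 k x =
      w i * gg 𝓗 i y + w j * gg 𝓗 j y + w k * gg 𝓗 k y := by
    rw [wi, wj, wk]; unfold gg DD; ring
  have := px i (by simp) ni
  have := px j (by simp) nj
  have := px k (by simp) nk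
  have := py i (by simp) ni
  have := py j (by simp) nj
  have := py k (by simp) nk
  linarith

lemma isOpen_cell (σ : Finset (Fin n)) : IsOpen (cell 𝓗 σ) := by
  have : cell 𝓗 σ = ⋂ l : Fin n, {x | gg 𝓗 l x ≠ 0 ∧ (0 < gg 𝓗 l x ↔ l ∈ σ)} := by
    ext x
    simp only [cell, Set.mem_ofPred_eq, Set.mem_iInter, Finset.ext_iff, mem_PP]
    exact ⟨fun h l => ⟨h.1 l, h.2 l⟩, fun h => ⟨fun l => (h l).1, fun l => (h l).2⟩⟩
  rw [this]
  apply isOpen_iInter_of_finite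
  intro l
  by_cases hl : l ∈ σ
  · have : {x | gg 𝓗 l x ≠ 0 ∧ (0 < gg 𝓗 l x ↔ l ∈ σ)} = {x | 0 < gg 𝓗 l x} := by
      ext x; simp only [hl, iff_true, Set.mem_ofPred_eq]
      exact ⟨fun h => h.2, fun h => ⟨h.ne', h⟩⟩
    rw [this]; exact isOpen_lt continuous_const (gg_cont l)
  · have : {x | gg 𝓗 l x ≠ 0 ∧ (0 < gg 𝓗 l x ↔ l ∈ σ)} = {x | gg 𝓗 l x < 0} := by
      ext x; simp only [hl, iff_false, Set.mem_ofPred_eq, not_lt]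
      exact ⟨fun h => lt_of_le_of_ne h.2 h.1, fun h => ⟨h.ne, h.le⟩⟩
    rw [this]; exact isOpen_lt (gg_cont l) continuous_const

/-- a generic second endpoint: the segment from `x` avoids all vertices -/
lemma exists_generic (hgp : 𝓗.GeneralPosition) {x : Fin 2 → ℝ} (hx : ∀ l, gg 𝓗 l x ≠ 0)
    {τ : Finset (Fin n)} (hτ : (cell 𝓗 τ).Nonempty) :
    ∃ y ∈ cell 𝓗 τ, ∀ i j, i ≠ j →
      gg 𝓗 i x * gg 𝓗 j y ≠ gg 𝓗 j x * gg 𝓗 i y := by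
  have hd : Dense (⋂ p : {p : Fin n × Fin n // p.1 ≠ p.2},
      {y | gg 𝓗 p.1.1 x * gg 𝓗 p.1.2 y ≠ gg 𝓗 p.1.2 x * gg 𝓗 p.1.1 y}) := by
    apply dense_iInter_of_isOpen
    · rintro ⟨⟨i, j⟩, hij⟩
      exact isOpen_ne_fun ((gg_cont j).const_mul _) ((gg_cont i).const_mul _)
    · rintro ⟨⟨i, j⟩, hij⟩
      simp only at hij ⊢
      -- normal of the linear form
      set α := gg 𝓗 i x * 𝓗.normal j 0 - gg 𝓗 j x * 𝓗.normal i 0 with hα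
      set β := gg 𝓗 i x * 𝓗.normal j 1 - gg 𝓗 j x * 𝓗.normal i 1 with hβ
      have hab : 0 < α ^ 2 + β ^ 2 := by
        have h0 : 0 ≤ α ^ 2 + β ^ 2 := by positivity
        refine lt_of_le_of_ne h0 (fun h => ?_)
        have hα0 : α = 0 := by nlinarith [sq_nonneg α, sq_nonneg β]
        have hβ0 : β = 0 := by nlinarith [sq_nonneg α, sq_nonneg β]
        have hD := DD_ne hgp hij
        have : gg 𝓗 i x * DD 𝓗 i j = 0 := by
          unfold DD
          linear_combination 𝓗.normal i 0 * (hβ0) - 𝓗.normal i 1 * hα0 + 𝓗.normal i 1 * hα - 𝓗.normal i 0 * hβ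
        exact mul_ne_zero (hx i) hD this
      intro y
      rw [mem_closure_iff_frequently]
      have hcont : Filter.Tendsto (fun s : ℝ => y + s • ![α, β]) (𝓝[>] 0) (𝓝 y) := by
        have : Continuous (fun s : ℝ => y + s • ![α, β]) := by fun_prop
        have h := this.tendsto 0
        simp only [zero_smul, add_zero] at h
        exact h.mono_left nhdsWithin_le_nhds
      apply hcont.frequently
      set G : (Fin 2 → ℝ) → ℝ := fun y => gg 𝓗 i x * gg 𝓗 j y - gg 𝓗 j x * gg 𝓗 i y with hG
      have hGs : ∀ s : ℝ, G (y + s • ![α, β]) = G y + s * (α ^ 2 + β ^ 2) := by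
        intro s
        simp only [hG, gg, Pi.add_apply, Pi.smul_apply, smul_eq_mul, Matrix.cons_val_zero,
          Matrix.cons_val_one]
        simp only [hα, hβ, gg]
        ring
      have hev : ∀ᶠ s in 𝓝[>] (0:ℝ), G (y + s • ![α, β]) ≠ 0 := by
        by_cases hy : 0 ≤ G y
        · filter_upwards [self_mem_nhdsWithin] with s hs
          have hs' : 0 < s := hs
          rw [hGs]
          have := mul_pos hs' hab
          have h3 : 0 < G y + s * (α ^ 2 + β ^ 2) := by linarith
          exact ne_of_gt h3
        · push Not at hy
          have hc : Continuous (fun s : ℝ => G y + s * (α ^ 2 + β ^ 2)) := by fun_prop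
          have := hc.continuousAt (x := 0)
          have h2 := this.eventually_lt_const (show G y + 0 * (α ^ 2 + β ^ 2) < 0 by simpa using hy)
          filter_upwards [nhdsWithin_le_nhds h2] with s hs
          rw [hGs]; exact hs.ne
      refine hev.frequently.mono ?_
      intro s hs h
      exact hs (sub_eq_zero.2 h)
  obtain ⟨y, hy1, hy2⟩ := hd.inter_open_nonempty _ (isOpen_cell τ) hτ
  refine ⟨y, hy1, fun i j hij => ?_⟩
  exact Set.mem_iInter.1 hy2 ⟨(i, j), hij⟩

lemma hW (hgp : 𝓗.GeneralPosition) (σ : Finset (Fin n)) (hσ : σ ∈ FF 𝓗) (τ : Finset (Fin n))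
    (hτ : τ ∈ FF 𝓗) (hne : σ ≠ τ) :
    ∃ i, (i ∈ σ ↔ i ∉ τ) ∧ ∃ t, σ.erase i = xphi (pp 𝓗) i (xU (TT 𝓗) i t) := by
  classical
  obtain ⟨x, hx, rfl⟩ := mem_FF.1 hσ
  obtain ⟨y, ⟨hy, rfl⟩, hxy⟩ := exists_generic hgp hx (τ := τ) (mem_FF.1 hτ)
  set s : Fin n → ℝ := fun l => gg 𝓗 l x / (gg 𝓗 l x - gg 𝓗 l y) with hs
  set R := Finset.univ.filter (fun l => (l ∈ PP 𝓗 x ↔ l ∉ PP 𝓗 y)) with hR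
  have hRn : R.Nonempty := by
    by_contra h
    rw [Finset.not_nonempty_iff_eq_empty] at h
    apply hne
    ext l
    have : l ∉ R := by simp [h]
    simp only [hR, Finset.mem_filter, Finset.mem_univ, true_and] at this
    tauto
  obtain ⟨i, hi, hmin⟩ := Finset.exists_min_image R s hRn
  have hRp : ∀ l ∈ R, (0 < gg 𝓗 l x ∧ gg 𝓗 l y < 0) ∨ (gg 𝓗 l x < 0 ∧ 0 < gg 𝓗 l y) := by
    intro l hl
    simp only [hR, Finset.mem_filter, Finset.mem_univ, true_and, mem_PP, not_lt] at hl
    rcases lt_or_gt_of_ne (hx l) with h | h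
    · right; refine ⟨h, ?_⟩
      by_contra h'
      exact absurd (hl.2 (not_lt.1 h')) (by linarith)
    · left; exact ⟨h, lt_of_le_of_ne (hl.1 h) (hy l)⟩
  have hs01 : ∀ l ∈ R, 0 < s l ∧ s l < 1 := by
    intro l hl
    simp only [hs]
    rcases hRp l hl with ⟨h1, h2⟩ | ⟨h1, h2⟩
    · exact ⟨div_pos h1 (by linarith), by rw [div_lt_one (by linarith)]; linarith⟩
    · exact ⟨div_pos_of_neg_of_neg h1 (by linarith), by
        rw [div_lt_one_of_neg (by linarith)]; linarith⟩
  set z : Fin 2 → ℝ := x + s i • (y - x) with hz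
  have hgz : ∀ l, gg 𝓗 l z = (1 - s i) * gg 𝓗 l x + s i * gg 𝓗 l y := by
    intro l
    simp only [gg, hz, Pi.add_apply, Pi.smul_apply, Pi.sub_apply, smul_eq_mul]
    ring
  have hsl : ∀ l ∈ R, s l * (gg 𝓗 l x - gg 𝓗 l y) = gg 𝓗 l x := by
    intro l hl
    simp only [hs]
    apply div_mul_cancel₀
    rcases hRp l hl with ⟨h1, h2⟩ | ⟨h1, h2⟩
    · exact ne_of_gt (by linarith)
    · exact ne_of_lt (by linarith)
  have hzi : gg 𝓗 i z = 0 := by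
    rw [hgz]; linarith [hsl i hi]
  have h01 := hs01 i hi
  have hzl : ∀ l, l ≠ i → gg 𝓗 l z ≠ 0 ∧ (0 < gg 𝓗 l z ↔ 0 < gg 𝓗 l x) := by
    intro l hl
    by_cases hlR : l ∈ R
    · have hlt : s i < s l := by
        refine lt_of_le_of_ne (hmin l hlR) ?_
        intro heq
        apply hxy i l hl.symm
        have e1 := hsl i hi
        have e2 := hsl l hlR
        rw [← heq] at e2
        have h0 := h01.1.ne'
        apply mul_left_cancel₀ h0
        linear_combination gg 𝓗 l x * e1 - gg 𝓗 i x * e2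
      have e : gg 𝓗 l z = (s l - s i) * (gg 𝓗 l x - gg 𝓗 l y) := by
        rw [hgz]; linear_combination - hsl l hlR
      rw [e]
      rcases hRp l hlR with ⟨h1, h2⟩ | ⟨h1, h2⟩
      · have := mul_pos (sub_pos.2 hlt) (show 0 < gg 𝓗 l x - gg 𝓗 l y by linarith)
        exact ⟨this.ne', iff_of_true this h1⟩
      · have := mul_neg_of_pos_of_neg (sub_pos.2 hlt) (show gg 𝓗 l x - gg 𝓗 l y < 0 by linarith)
        exact ⟨this.ne, iff_of_false this.not_gt h1.not_gt⟩
    · simp only [hR, Finset.mem_filter, Finset.mem_univ, true_and, mem_PP] at hlR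
      rw [hgz]
      have hp : 0 < 1 - s i := by linarith
      rcases lt_or_gt_of_ne (hx l) with h | h
      · have h' : gg 𝓗 l y < 0 := by
          refine lt_of_le_of_ne ?_ (hy l)
          by_contra hcon
          push Not at hcon
          exact hlR (iff_of_false h.not_gt (not_not.2 hcon))
        have := add_neg (mul_neg_of_pos_of_neg hp h) (mul_neg_of_pos_of_neg h01.1 h')
        exact ⟨this.ne, iff_of_false this.not_gt h.not_gt⟩
      · have h' : 0 < gg 𝓗 l y := by
          by_contra hcon
          exact hlR (iff_of_true h hcon)
        have := add_pos (mul_pos hp h) (mul_pos h01.1 h')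
        exact ⟨this.ne', iff_of_true this h⟩
  obtain ⟨t, ht⟩ := exists_pt hzi
  refine ⟨i, (Finset.mem_filter.1 hi).2, t, ?_⟩
  ext l
  by_cases hl : l = i
  · subst hl; simp [mem_xphi]
  · rw [mem_e hgp hl, ← ht, (hzl l hl).2, Finset.mem_erase, mem_PP]
    · simp [hl]
    · intro h
      apply (hzl l hl).1
      rw [ht, gg_pt hgp (Ne.symm hl), h]; simp

lemma cell_convex (σ : Finset (Fin n)) : Convex ℝ (cell 𝓗 σ) := by
  intro x hx y hy a b ha hb hab
  obtain ⟨hx1, hx2⟩ := hx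
  obtain ⟨hy1, hy2⟩ := hy
  have hg : ∀ l, gg 𝓗 l (a • x + b • y) = a * gg 𝓗 l x + b * gg 𝓗 l y := by
    intro l
    simp only [gg, Pi.add_apply, Pi.smul_apply, smul_eq_mul]
    linear_combination 𝓗.offset l * hab
  have key : ∀ l, gg 𝓗 l (a • x + b • y) ≠ 0 ∧ (0 < gg 𝓗 l (a • x + b • y) ↔ l ∈ σ) := by
    intro l
    rw [hg]
    have h1 : 0 < gg 𝓗 l x ↔ l ∈ σ := by rw [← hx2, mem_PP]
    have h2 : 0 < gg 𝓗 l y ↔ l ∈ σ := by rw [← hy2, mem_PP]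
    have hab' : 0 < a ∨ 0 < b := by
      by_contra h; push Not at h; linarith
    by_cases hl : l ∈ σ
    · have p1 := h1.2 hl
      have p2 := h2.2 hl
      have : 0 < a * gg 𝓗 l x + b * gg 𝓗 l y := by
        rcases hab' with h | h
        · have := mul_pos h p1; have := mul_nonneg hb p2.le; linarith
        · have := mul_pos h p2; have := mul_nonneg ha p1.le; linarith
      exact ⟨this.ne', iff_of_true this hl⟩
    · have p1 : gg 𝓗 l x < 0 := lt_of_le_of_ne (not_lt.1 (fun h => hl (h1.1 h))) (hx1 l)
      have p2 : gg 𝓗 l y < 0 := lt_of_le_of_ne (not_lt.1 (fun h => hl (h2.1 h))) (hy1 l)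
      have : a * gg 𝓗 l x + b * gg 𝓗 l y < 0 := by
        rcases hab' with h | h
        · have := mul_neg_of_pos_of_neg h p1
          have := mul_nonpos_of_nonneg_of_nonpos hb p2.le; linarith
        · have := mul_neg_of_pos_of_neg h p2
          have := mul_nonpos_of_nonneg_of_nonpos ha p1.le; linarith
      exact ⟨this.ne, iff_of_false this.not_gt hl⟩
  refine ⟨fun l => (key l).1, ?_⟩
  ext l
  rw [mem_PP, (key l).2]

lemma comp_eq_cell {x : Fin 2 → ℝ} (hx : x ∈ 𝓗.free) :
    connectedComponentIn 𝓗.free x = cell 𝓗 (PP 𝓗 x) := by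
  apply Set.Subset.antisymm
  · intro y hy
    have hpre := isPreconnected_connectedComponentIn (F := 𝓗.free) (x := x)
    have hsub := connectedComponentIn_subset 𝓗.free x
    have hxm := mem_connectedComponentIn hx
    refine ⟨mem_free.1 (hsub hy), ?_⟩
    ext l
    rw [mem_PP, mem_PP]
    constructor
    · intro h
      by_contra h'
      obtain ⟨w, hw, hw0⟩ := hpre.intermediate_value hxm hy (gg_cont l).continuousOn
        (⟨not_lt.1 h', h.le⟩ : (0:ℝ) ∈ Set.Icc _ _)
      exact mem_free.1 (hsub hw) l hw0
    · intro h
      by_contra h'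
      obtain ⟨w, hw, hw0⟩ := hpre.intermediate_value hy hxm (gg_cont l).continuousOn
        (⟨not_lt.1 h', h.le⟩ : (0:ℝ) ∈ Set.Icc _ _)
      exact mem_free.1 (hsub hw) l hw0
  · apply (cell_convex _).isPreconnected.subset_connectedComponentIn
    · exact ⟨mem_free.1 hx, rfl⟩
    · intro y hy
      exact mem_free.2 hy.1

lemma chambers_eq : 𝓗.chambers = cell 𝓗 '' (FF 𝓗 : Set (Finset (Fin n))) := by
  ext C
  constructor
  · rintro ⟨x, hx, rfl⟩
    exact ⟨PP 𝓗 x, mem_FF.2 ⟨x, mem_free.1 hx, rfl⟩, (comp_eq_cell hx).symm⟩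
  · rintro ⟨σ, hσ, rfl⟩
    obtain ⟨x, hx, rfl⟩ := mem_FF.1 hσ
    exact ⟨x, mem_free.2 hx, (comp_eq_cell (mem_free.2 hx)).symm⟩

lemma cell_inj : Set.InjOn (cell 𝓗) (FF 𝓗 : Set (Finset (Fin n))) := by
  intro σ hσ τ hτ h
  obtain ⟨x, hx, rfl⟩ := mem_FF.1 hσ
  have : x ∈ cell 𝓗 τ := by rw [← h]; exact ⟨hx, rfl⟩
  exact this.2

lemma cell_sub_pos {σ : Finset (Fin n)} (hσ : σ ∈ FF 𝓗) {l : Fin n} :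
    cell 𝓗 σ ⊆ 𝓗.pos l ↔ l ∈ σ := by
  constructor
  · intro h
    obtain ⟨x, hx, rfl⟩ := mem_FF.1 hσ
    exact mem_PP.2 (mem_pos.1 (h ⟨hx, rfl⟩))
  · rintro h x ⟨hx, rfl⟩
    exact mem_pos.2 (mem_PP.1 h)

lemma cell_sub_neg {σ : Finset (Fin n)} (hσ : σ ∈ FF 𝓗) {l : Fin n} :
    cell 𝓗 σ ⊆ 𝓗.neg l ↔ l ∉ σ := by
  constructor
  · intro h
    obtain ⟨x, hx, rfl⟩ := mem_FF.1 hσ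
    have := mem_neg.1 (h ⟨hx, rfl⟩)
    rw [mem_PP]; exact this.not_gt
  · rintro h x ⟨hx, rfl⟩
    rw [mem_PP] at h
    exact mem_neg.2 (lt_of_le_of_ne (not_lt.1 h) (hx l))

lemma sep_iff {σ τ : Finset (Fin n)} (hσ : σ ∈ FF 𝓗) (hτ : τ ∈ FF 𝓗) {l : Fin n} :
    𝓗.Separates l (cell 𝓗 σ) (cell 𝓗 τ) ↔ (l ∈ σ ↔ l ∉ τ) := by
  unfold Arrangement.Separates
  rw [cell_sub_pos hσ, cell_sub_pos hτ, cell_sub_neg hσ, cell_sub_neg hτ]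
  tauto

lemma adj_insert {ρ : Finset (Fin n)} {i : Fin n} (hi : i ∉ ρ) (h1 : ρ ∈ FF 𝓗)
    (h2 : insert i ρ ∈ FF 𝓗) :
    𝓗.Adj (cell 𝓗 ρ) (cell 𝓗 (insert i ρ)) ∧ 𝓗.Adj (cell 𝓗 (insert i ρ)) (cell 𝓗 ρ) := by
  have m1 : cell 𝓗 ρ ∈ 𝓗.chambers := by rw [chambers_eq]; exact ⟨ρ, h1, rfl⟩
  have m2 : cell 𝓗 (insert i ρ) ∈ 𝓗.chambers := by rw [chambers_eq]; exact ⟨_, h2, rfl⟩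
  refine ⟨⟨m1, m2, i, ?_, ?_⟩, ⟨m2, m1, i, ?_, ?_⟩⟩
  · simp only [sep_iff h1 h2]; simp [hi]
  · intro e he
    simp only [sep_iff h1 h2, Finset.mem_insert] at he
    tauto
  · simp only [sep_iff h2 h1]; simp [hi]
  · intro e he
    simp only [sep_iff h2 h1, Finset.mem_insert] at he
    tauto

end Geometry

/-- (Conjecture, proved in the plane.) Let `S` be an arbitrary subset
of at most half of the chambers of an arrangement in general position in `ℝ²`, with
`|S| = 1 + k + k(k-1)/2` for some real `k ≥ 1`. Then `|∂S| ≥ k + 1`. -/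
theorem stmt9 {n : ℕ} (𝓗 : Arrangement 2 n) (hgp : 𝓗.GeneralPosition)
    (S : Set (Set (Fin 2 → ℝ))) (hS : S ⊆ 𝓗.chambers)
    (hhalf : 2 * S.ncard ≤ (𝓗.chambers).ncard)
    (k : ℝ) (hk : 1 ≤ k)
    (hcard : (S.ncard : ℝ) = 1 + k + k * (k - 1) / 2) :
    k + 1 ≤ ((𝓗.edgeBoundary S).ncard : ℝ) := by
  classical
  set SF : Finset (Finset (Fin n)) := (FF 𝓗).filter (fun σ => cell 𝓗 σ ∈ S) with hSF
  have hSFsub : SF ⊆ FF 𝓗 := Finset.filter_subset _ _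
  have hSeq : S = cell 𝓗 '' (SF : Set (Finset (Fin n))) := by
    ext C
    constructor
    · intro hC
      have := hS hC
      rw [chambers_eq] at this
      obtain ⟨σ, hσ, rfl⟩ := this
      exact ⟨σ, Finset.mem_coe.2 (Finset.mem_filter.2 ⟨hσ, hC⟩), rfl⟩
    · rintro ⟨σ, hσ, rfl⟩
      exact (Finset.mem_filter.1 (Finset.mem_coe.1 hσ)).2
  have hSc : S.ncard = SF.card := by
    rw [hSeq, Set.ncard_image_of_injOn (cell_inj.mono (by exact_mod_cast hSFsub)),
      Set.ncard_coe_finset]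
  have hFc : (𝓗.chambers).ncard = (FF 𝓗).card := by
    rw [chambers_eq, Set.ncard_image_of_injOn cell_inj, Set.ncard_coe_finset]
  rw [hSc, hFc] at hhalf
  rw [hSc] at hcard
  have main := abstract_main (S := SF) (TT_inj hgp) (hCR hgp) (fun i t => (hF hgp i t).1) (hW hgp)
    (hSh hgp) hSFsub hhalf k hk hcard
  refine main.trans ?_
  have hfin : (𝓗.edgeBoundary S).Finite := by
    have hcf : (𝓗.chambers).Finite := by
      rw [chambers_eq]; exact (Finset.finite_toSet _).image _
    refine (hcf.prod hcf).subset ?_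
    rintro ⟨C, C'⟩ ⟨_, _, h1, h2, _⟩
    exact ⟨h1, h2⟩
  have hcS : ∀ σ ∈ FF 𝓗, (cell 𝓗 σ ∈ S ↔ σ ∈ SF) := by
    intro σ hσ
    simp [hSF, hσ]
  set f : Fin n × Finset (Fin n) → Set (Fin 2 → ℝ) × Set (Fin 2 → ℝ) := fun p =>
    if p.2 ∈ SF then (cell 𝓗 p.2, cell 𝓗 (insert p.1 p.2))
    else (cell 𝓗 (insert p.1 p.2), cell 𝓗 p.2) with hf
  have hQ : ∀ p ∈ xQ (TT 𝓗) (pp 𝓗) (· ∈ SF), p.1 ∉ p.2 ∧ p.2 ∈ FF 𝓗 ∧ insert p.1 p.2 ∈ FF 𝓗 ∧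
      ¬ (p.2 ∈ SF ↔ insert p.1 p.2 ∈ SF) := by
    intro p hp
    obtain ⟨⟨t, ht⟩, hne⟩ := mem_xQ.1 hp
    have := hF hgp p.1 t
    rw [← ht] at this
    refine ⟨?_, this.1, this.2, hne⟩
    rw [ht]; exact self_notMem_xphi
  have hle : (xQ (TT 𝓗) (pp 𝓗) (· ∈ SF)).card ≤ (𝓗.edgeBoundary S).ncard := by
    rw [← Set.ncard_coe_finset]
    refine Set.ncard_le_ncard_of_injOn f ?_ ?_ hfin
    · intro p hp
      obtain ⟨h1, h2, h3, h4⟩ := hQ p hp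
      have ha := adj_insert h1 h2 h3
      have c1 := hcS _ h2
      have c2 := hcS _ h3
      by_cases h : p.2 ∈ SF
      · simp only [hf, h, if_true]
        exact ⟨c1.2 h, fun h' => h4 (iff_of_true h (c2.1 h')), ha.1⟩
      · simp only [hf, h, if_false]
        refine ⟨?_, fun h' => h (c1.1 h'), ha.2⟩
        by_contra h'
        exact h4 (iff_of_false h (fun h'' => h' (c2.2 h'')))
    · intro p hp p' hp' hpp
      obtain ⟨h1, h2, h3, h4⟩ := hQ p hp
      obtain ⟨h1', h2', h3', h4'⟩ := hQ p' hp'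
      have key : (p.2 = p'.2 ∧ insert p.1 p.2 = insert p'.1 p'.2) ∨
          (p.2 = insert p'.1 p'.2 ∧ insert p.1 p.2 = p'.2) := by
        by_cases h : p.2 ∈ SF <;> by_cases h' : p'.2 ∈ SF <;>
          simp only [hf, h, h', if_true, if_false, Prod.mk.injEq] at hpp
        · exact Or.inl ⟨cell_inj h2 h2' hpp.1, cell_inj h3 h3' hpp.2⟩
        · exact Or.inr ⟨cell_inj h2 h3' hpp.1, cell_inj h3 h2' hpp.2⟩
        · exact Or.inr ⟨cell_inj h2 h3' hpp.2, cell_inj h3 h2' hpp.1⟩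
        · exact Or.inl ⟨cell_inj h2 h2' hpp.2, cell_inj h3 h3' hpp.1⟩
      rcases key with ⟨e1, e2⟩ | ⟨e1, e2⟩
      · have : p.1 ∈ insert p'.1 p'.2 := by rw [← e2]; simp
        rw [← e1, Finset.mem_insert] at this
        exact Prod.ext (this.resolve_right h1) e1
      · exfalso
        have a1 := Finset.card_insert_of_notMem h1
        have a2 := Finset.card_insert_of_notMem h1'
        rw [e2] at a1
        rw [← e1] at a2
        omega
  exact_mod_cast hle
end
end
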